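/- arXiv:1610.03669 — 4 statements merged into one kernel-verified Lean document; each statement's English description precedes it below -/
import Mathlib

section
/- Let G be a finite group of order n satisfying 5·ψ(G) ≥ 3·n·φ(n), where φ is Euler's totient function. Then G is solvable and the second derived subgroup G'' is contained in the center Z(G). -/
/-- `psi G` is the sum of the orders of all elements of the finite group `G`. -/
noncomputable def psi (G : Type*) [Group G] [Fintype G] : ℕ := ∑ x : G, orderOf x

section GroupTheory

open Subgroup

variable {G : Type*} [Group G]

theorem derivedSeries_two_eq_bot_of_commutator_le {N : Subgroup G} (hN : N ≤ centralizer N)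
    (h : commutator G ≤ N) : derivedSeries G 2 = ⊥ := by
  rw [derivedSeries_succ, derivedSeries_one, commutator_eq_bot_iff_le_centralizer]
  exact h.trans (hN.trans (centralizer_le (by exact_mod_cast h)))

theorem isSolvable_of_derivedSeries_two_le_center (h : derivedSeries G 2 ≤ center G) :
    IsSolvable G := by
  refine ⟨3, ?_⟩
  rw [derivedSeries_succ, commutator_eq_bot_iff_le_centralizer]
  exact h.trans (center_le_centralizer _)

theorem le_centralizer_of_isMulCommutative {A : Subgroup G} (h : IsMulCommutative A) :
    A ≤ centralizer A := le_centralizer_iff_isMulCommutative.mpr h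

theorem commutator_le_of_isMulCommutative_quotient {N : Subgroup G} [N.Normal]
    (h : IsMulCommutative (G ⧸ N)) : commutator G ≤ N :=
  Normal.quotient_commutative_iff_commutator_le.mp h

theorem commutator_le_of_sup_eq_top {N A : Subgroup G} [N.Normal] (hA : A ≤ centralizer A)
    (h : N ⊔ A = ⊤) : commutator G ≤ N := by
  apply commutator_le_of_isMulCommutative_quotient
  have key : ∀ q : G ⧸ N, ∃ a ∈ A, (a : G ⧸ N) = q := by
    intro q
    induction q using QuotientGroup.induction_on with
    | H g =>
      have hg : g ∈ N ⊔ A := h ▸ mem_top g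
      obtain ⟨n, hn, a, ha, rfl⟩ := mem_sup_of_normal_left.mp hg
      refine ⟨a, ha, ?_⟩
      rw [QuotientGroup.mk_mul, (QuotientGroup.eq_one_iff n).mpr hn, one_mul]
  refine ⟨⟨fun p q => ?_⟩⟩
  obtain ⟨a, ha, rfl⟩ := key p
  obtain ⟨b, hb, rfl⟩ := key q
  rw [← QuotientGroup.mk_mul, ← QuotientGroup.mk_mul, mem_centralizer_iff.mp (hA hb) a ha]

theorem normal_of_le_of_isCyclic {K U : Subgroup G} [hn : K.Normal] (hK : IsCyclic K)
    (hU : U ≤ K) : U.Normal := by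
  have hUc : IsCyclic U := isCyclic_of_le hU
  obtain ⟨k, rfl⟩ := (Subgroup.isCyclic_iff_exists_zpowers_eq_top K).mp hK
  obtain ⟨u, rfl⟩ := (Subgroup.isCyclic_iff_exists_zpowers_eq_top U).mp hUc
  obtain ⟨m, rfl⟩ := mem_zpowers_iff.mp (hU (mem_zpowers u))
  refine ⟨fun y hy g => ?_⟩
  obtain ⟨i, rfl⟩ := mem_zpowers_iff.mp hy
  obtain ⟨j, hj⟩ := mem_zpowers_iff.mp (hn.conj_mem k (mem_zpowers k) g)
  refine mem_zpowers_iff.mpr ⟨j * i, ?_⟩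
  rw [← conj_zpow, ← conj_zpow, ← hj]
  simp only [← zpow_mul]
  congr 1
  ring

theorem commutator_le_centralizer_of_isCyclic {K : Subgroup G} [K.Normal] (hK : IsCyclic K) :
    commutator G ≤ centralizer K := by
  intro c hc
  have h := Abelianization.commutator_subset_ker
    ((IsCyclic.mulAutMulEquiv K).toMonoidHom.comp (MulAut.conjNormal (H := K))) hc
  rw [MonoidHom.mem_ker, MonoidHom.comp_apply] at h
  have h1 : MulAut.conjNormal (H := K) c = 1 :=
    (IsCyclic.mulAutMulEquiv K).injective (h.trans (map_one _).symm)
  refine mem_centralizer_iff.mpr fun k hk => ?_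
  have h2 := MulAut.conjNormal_apply c (⟨k, hk⟩ : K)
  rw [h1, MulAut.one_apply] at h2
  exact eq_mul_inv_iff_mul_eq.mp h2

theorem derivedSeries_two_le_of_quotient {K : Subgroup G} [K.Normal]
    (h : derivedSeries (G ⧸ K) 2 = ⊥) : derivedSeries G 2 ≤ K := by
  rw [← map_derivedSeries_eq (QuotientGroup.mk'_surjective K), Subgroup.map_eq_bot_iff,
    QuotientGroup.ker_mk'] at h
  exact h

theorem inf_map_conj_le_center [Finite G] {A : Subgroup G} (hA : A ≤ centralizer A)
    (hmax : IsCoatom A) {g : G} (hg : A.map (MulAut.conj g).toMonoidHom ≠ A) :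
    A ⊓ A.map (MulAut.conj g).toMonoidHom ≤ center G := by
  intro z hz
  obtain ⟨hzA, b, hb, rfl⟩ := mem_inf.mp hz
  set B := A.map (MulAut.conj g).toMonoidHom with hB
  have hBcard : Nat.card B = Nat.card A := card_map_of_injective (MulAut.conj g).injective
  have hBc : B ≤ centralizer {(MulAut.conj g).toMonoidHom b} := by
    rintro _ ⟨c, hc, rfl⟩
    rw [mem_centralizer_singleton_iff, ← map_mul, ← map_mul, mem_centralizer_iff.mp (hA hb) c hc]
  have hAc : A ≤ centralizer {(MulAut.conj g).toMonoidHom b} := fun a ha =>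
    mem_centralizer_singleton_iff.mpr (mem_centralizer_iff.mp (hA hzA) a ha)
  rcases hmax.le_iff.mp hAc with h | h
  · rw [mem_center_iff]
    intro y
    exact mem_centralizer_singleton_iff.mp (h ▸ mem_top y)
  · rw [h] at hBc
    exact absurd (eq_of_le_of_card_ge hBc hBcard.ge) hg

/-- A commutative, core-free maximal subgroup is at most as large as its index. -/
theorem card_le_index_of_isCoatom [Finite G] {C : Subgroup G} (hC : C ≤ centralizer C)
    (hmax : IsCoatom C) (hcore : C.normalCore = ⊥) : Nat.card C ≤ C.index := by
  by_cases hn : C.Normal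
  · rw [normalCore_eq_self] at hcore
    rw [hcore, card_bot]
    exact Nat.one_le_iff_ne_zero.mpr index_ne_zero_of_finite
  obtain ⟨g, hg⟩ : ∃ g, C.map (MulAut.conj g).toMonoidHom ≠ C := by
    by_contra! h
    exact hn ⟨fun n hn g => h g ▸ mem_map_of_mem _ hn⟩
  set B := C.map (MulAut.conj g).toMonoidHom with hB
  have hBcard : Nat.card B = Nat.card C := card_map_of_injective (MulAut.conj g).injective
  have hcen := inf_map_conj_le_center hC hmax hg
  have hnorm : (C ⊓ B).Normal := ⟨fun n hn g => by
    rw [mem_center_iff.mp (hcen hn) g, mul_inv_cancel_right]; exact hn⟩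
  have hbot : C ⊓ B = ⊥ := le_bot_iff.mp (hcore ▸ normal_le_normalCore.mpr inf_le_left)
  rw [← hBcard, ← relIndex_bot_left, ← hbot, inf_relIndex_right, ← relIndex_top_right]
  exact relIndex_le_of_le_right le_top (by rw [relIndex_top_right]; exact index_ne_zero_of_finite)

theorem normal_ne_bot_sup_eq_top {C R : Subgroup G} (hmax : IsCoatom C)
    (hcore : C.normalCore = ⊥) [R.Normal] (hR : R ≠ ⊥) : R ⊔ C = ⊤ := by
  rcases hmax.le_iff.mp (le_sup_right : C ≤ R ⊔ C) with h | h
  · exact h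
  · have hRC : R ≤ C := h ▸ le_sup_left
    exact absurd (le_bot_iff.mp (hcore ▸ normal_le_normalCore.mpr hRC)) hR

theorem derivedSeries_two_eq_bot_of_index_prime [Finite G] {C : Subgroup G}
    (hC : C ≤ centralizer C) (hmax : IsCoatom C) (hcore : C.normalCore = ⊥)
    (hp : C.index.Prime) : derivedSeries G 2 = ⊥ := by
  have hle := card_le_index_of_isCoatom hC hmax hcore
  set r := C.index with hr
  have : Fact r.Prime := ⟨hp⟩
  have hG : Nat.card C * r = Nat.card G := C.card_mul_index
  obtain ⟨R⟩ : Nonempty (Sylow r G) := inferInstance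
  have hrR : r ∣ Nat.card R := R.dvd_card_of_dvd_card ⟨_, (mul_comm _ _).trans hG |>.symm⟩
  have hRi : Nat.card R * (R : Subgroup G).index = Nat.card G := (R : Subgroup G).card_mul_index
  have hpos : 0 < Nat.card C := Nat.card_pos
  have hipos : 0 < (R : Subgroup G).index := Nat.pos_of_ne_zero index_ne_zero_of_finite
  have hrle := Nat.le_of_dvd Nat.card_pos hrR
  have hi : (R : Subgroup G).index ≤ r := by
    by_contra! h
    nlinarith [hp.pos]
  have hn : Nat.card (Sylow r G) = 1 := by
    have h1 := card_sylow_modEq_one r G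
    have h2 := Nat.le_of_dvd hipos R.card_dvd_index
    rcases (h2.trans hi).lt_or_eq with h | h
    · exact Nat.ModEq.eq_of_lt_of_lt h1 h hp.one_lt
    · rw [h, Nat.ModEq, Nat.mod_self, Nat.mod_eq_of_lt hp.one_lt] at h1
      omega
  have : Subsingleton (Sylow r G) := (Nat.card_eq_one_iff_unique.mp hn).1
  have hRn : (R : Subgroup G).Normal := R.normal_of_subsingleton
  have hRbot : (R : Subgroup G) ≠ ⊥ := by
    intro h
    have h1 : Nat.card R = 1 := by rw [h, card_bot]
    rw [h1] at hrR
    exact hp.one_lt.ne' (Nat.dvd_one.mp hrR)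
  refine derivedSeries_two_eq_bot_of_commutator_le ?_
    (commutator_le_of_sup_eq_top hC (normal_ne_bot_sup_eq_top hmax hcore hRbot))
  obtain ⟨j, hj⟩ := R.2.exists_card_eq
  have hj2 : j ≤ 2 := by
    refine (Nat.pow_le_pow_iff_right hp.one_lt).mp ?_
    rw [← hj, sq]
    calc _ ≤ Nat.card R * (R : Subgroup G).index := Nat.le_mul_of_pos_right _ hipos
      _ ≤ _ := by rw [hRi, ← hG]; exact Nat.mul_le_mul_right _ hle
  apply le_centralizer_of_isMulCommutative
  have hj0 : j ≠ 0 := by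
    rintro rfl
    rw [hj, pow_zero] at hrR
    exact hp.one_lt.ne' (Nat.dvd_one.mp hrR)
  obtain rfl | rfl : j = 1 ∨ j = 2 := by omega
  · have := isCyclic_of_prime_card (hj.trans (pow_one r))
    infer_instance
  · exact IsPGroup.isMulCommutative_of_card_eq_prime_sq hj

theorem derivedSeries_two_eq_bot_of_index_four [Finite G] {C : Subgroup G}
    (hC : C ≤ centralizer C) (hmax : IsCoatom C) (hcore : C.normalCore = ⊥)
    (h4 : C.index = 4) : derivedSeries G 2 = ⊥ := by
  have hle := card_le_index_of_isCoatom hC hmax hcore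
  have hG : Nat.card C * C.index = Nat.card G := C.card_mul_index
  rw [h4] at hle hG
  have hpos : 0 < Nat.card C := Nat.card_pos
  have h2 : Fact (Nat.Prime 2) := ⟨Nat.prime_two⟩
  have h3 : Fact (Nat.Prime 3) := ⟨Nat.prime_three⟩
  have hnormal : C.Normal → Nat.card C = 1 := fun h => by
    rw [normalCore_eq_self] at hcore
    rw [hcore, card_bot]
  have hpow : ∀ k, Nat.card G = 2 ^ k → Nat.card C = 1 := fun k hk => by
    have := (IsPGroup.of_card hk).isNilpotent
    exact hnormal (NormalizerCondition.normal_of_coatom _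
      Group.normalizerCondition_of_isNilpotent hmax)
  by_cases hC3 : Nat.card C = 3
  · have hpg : IsPGroup 3 C := IsPGroup.of_card (n := 1) (by rw [hC3]; rfl)
    obtain ⟨P, rfl⟩ : ∃ P : Sylow 3 G, (P : Subgroup G) = C :=
      ⟨hpg.toSylow (by rw [h4]; decide), rfl⟩
    have hN : normalizer (P : Set G) ≤ centralizer (P : Set G) := by
      rcases hmax.le_iff.mp (le_normalizer : (P : Subgroup G) ≤ _) with h | h
      · have := hnormal (normalizer_eq_top_iff.mp h)
        omega
      · exact h.le.trans hC
    have hcompl := MonoidHom.ker_transferSylow_isComplement' P hN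
    refine derivedSeries_two_eq_bot_of_commutator_le ?_
      (commutator_le_of_sup_eq_top hC hcompl.sup_eq_top)
    refine le_centralizer_of_isMulCommutative
      (IsPGroup.isMulCommutative_of_card_eq_prime_sq (p := 2) ?_)
    have := hcompl.card_mul_card
    rw [hC3] at this
    omega
  · have hC1 : Nat.card C = 1 := by
      obtain h | h | h : Nat.card C = 1 ∨ Nat.card C = 2 ∨ Nat.card C = 4 := by omega
      · exact h
      · exact hpow 3 (by omega)
      · exact hpow 4 (by omega)
    have hcomm := IsPGroup.isMulCommutative_of_card_eq_prime_sq
      (show Nat.card G = 2 ^ 2 by omega)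
    refine derivedSeries_two_eq_bot_of_commutator_le (N := ⊤) ?_ le_top
    intro x _
    exact mem_centralizer_iff.mpr fun y _ => hcomm.is_comm.comm y x

theorem not_dvd_card_of_index_six [Finite G] {C : Subgroup G}
    (hC : C ≤ centralizer C) (hmax : IsCoatom C) (hcore : C.normalCore = ⊥)
    (h6 : C.index = 6) : ¬ 5 ∣ Nat.card C := by
  intro h5
  have hle := card_le_index_of_isCoatom hC hmax hcore
  have hG : Nat.card C * C.index = Nat.card G := C.card_mul_index
  have hpos : 0 < Nat.card C := Nat.card_pos
  rw [h6] at hle hG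
  have hC5 : Nat.card C = 5 := by omega
  have hG30 : Nat.card G = 30 := by omega
  have h2 : Fact (Nat.Prime 2) := ⟨Nat.prime_two⟩
  obtain ⟨P⟩ : Nonempty (Sylow 2 G) := inferInstance
  have hPcard : Nat.card P = 2 := by
    rw [P.card_eq_multiplicity, hG30]
    have : Nat.factorization 30 2 = 1 := by
      rw [show 30 = 2 ^ 1 * 15 by norm_num, Nat.factorization_mul (by norm_num) (by norm_num)]
      simp [Nat.prime_two.factorization_self,
        Nat.factorization_eq_zero_of_not_dvd (show ¬ 2 ∣ 15 by norm_num)]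
    rw [this, pow_one]
  have hP : IsCyclic P := isCyclic_of_prime_card hPcard
  obtain ⟨N, hN, hcompl⟩ : ∃ N : Subgroup G, N.Normal ∧ N.IsComplement' P :=
    ⟨_, inferInstance, hP.isComplement' (by rw [hG30]; norm_num)⟩
  have hNi : N.index = 2 := by rw [hcompl.symm.index_eq_card, hPcard]
  have hCN : C ≤ N := by
    rw [← relIndex_eq_one]
    have h1 : N.relIndex C ∣ 2 := hNi ▸ relIndex_dvd_index_of_normal N C
    have h2 : N.relIndex C ∣ 5 := hC5 ▸ relIndex_dvd_card N C
    exact Nat.dvd_one.mp ((by norm_num : Nat.gcd 2 5 = 1) ▸ Nat.dvd_gcd h1 h2)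
  rcases hmax.le_iff.mp hCN with h | h
  · rw [h, index_top] at hNi; omega
  · rw [h] at hNi; omega

theorem isCoatom_map_mk' {A K : Subgroup G} [K.Normal] (hK : K ≤ A) (hmax : IsCoatom A) :
    IsCoatom (A.map (QuotientGroup.mk' K)) := by
  have hcomap : (A.map (QuotientGroup.mk' K)).comap (QuotientGroup.mk' K) = A :=
    comap_map_eq_self (by rwa [QuotientGroup.ker_mk'])
  have hsurj := QuotientGroup.mk'_surjective K
  refine ⟨fun h => hmax.1 ?_, fun L hL => ?_⟩
  · rw [← hcomap, h, comap_top]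
  · have h1 : L.comap (QuotientGroup.mk' K) = ⊤ := by
      refine hmax.2 _ (lt_of_le_of_ne (hcomap.symm.le.trans (comap_mono hL.le)) fun h => hL.ne ?_)
      rw [h, map_comap_eq_self_of_surjective hsurj]
    rw [← map_comap_eq_self_of_surjective hsurj L, h1, map_top_of_surjective _ hsurj]

theorem normalCore_map_mk'_normalCore (A : Subgroup G) :
    (A.map (QuotientGroup.mk' A.normalCore)).normalCore = ⊥ := by
  set f := QuotientGroup.mk' A.normalCore
  have hcomap : (A.map f).comap f = A :=
    comap_map_eq_self (by rw [QuotientGroup.ker_mk']; exact A.normalCore_le)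
  have hsurj : Function.Surjective f := QuotientGroup.mk'_surjective _
  have h1 : (A.map f).normalCore.comap f ≤ A.normalCore :=
    normal_le_normalCore.mpr ((comap_mono (normalCore_le _)).trans hcomap.le)
  rw [← map_comap_eq_self_of_surjective hsurj (A.map f).normalCore, Subgroup.map_eq_bot_iff,
    QuotientGroup.ker_mk']
  exact h1

theorem map_le_centralizer_map {G' : Type*} [Group G'] {A : Subgroup G} (hA : A ≤ centralizer A)
    (f : G →* G') : A.map f ≤ centralizer (A.map f) := by
  rintro _ ⟨a, ha, rfl⟩
  refine mem_centralizer_iff.mpr ?_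
  rintro _ ⟨b, hb, rfl⟩
  rw [← map_mul, ← map_mul, mem_centralizer_iff.mp (hA ha) b hb]

theorem normalCore_le_center [Finite G] {A : Subgroup G} (hA : A ≤ centralizer A)
    (hmax : IsCoatom A) (hn : ¬ A.Normal) : A.normalCore ≤ center G := by
  obtain ⟨g, hg⟩ : ∃ g, A.map (MulAut.conj g).toMonoidHom ≠ A := by
    by_contra! h
    exact hn ⟨fun n hn g => h g ▸ mem_map_of_mem _ hn⟩
  refine le_trans (le_inf A.normalCore_le fun z hz => ?_) (inf_map_conj_le_center hA hmax hg)
  refine ⟨g⁻¹ * z * g, ?_, by simp [mul_assoc]⟩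
  have := A.normalCore_normal.conj_mem z hz g⁻¹
  rw [inv_inv] at this
  exact A.normalCore_le this

theorem derivedSeries_two_le_center_of_isCoatom [Finite G] {A : Subgroup G}
    (hA : A ≤ centralizer A) (hmax : IsCoatom A) (hidx : A.index.Prime ∨ A.index = 4) :
    derivedSeries G 2 ≤ center G := by
  by_cases hn : A.Normal
  · refine (derivedSeries_two_eq_bot_of_commutator_le hA
      (commutator_le_of_isMulCommutative_quotient ?_)).trans_le bot_le
    rcases hidx with h | h
    · have : Fact A.index.Prime := ⟨h⟩
      have := isCyclic_of_prime_card (α := G ⧸ A) A.index_eq_card.symm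
      infer_instance
    · have : Fact (Nat.Prime 2) := ⟨Nat.prime_two⟩
      exact IsPGroup.isMulCommutative_of_card_eq_prime_sq (p := 2) (A.index_eq_card.symm.trans h)
  · refine le_trans (derivedSeries_two_le_of_quotient ?_) (normalCore_le_center hA hmax hn)
    have hC := map_le_centralizer_map hA (QuotientGroup.mk' A.normalCore)
    have hCmax := isCoatom_map_mk' A.normalCore_le hmax
    have hcore := normalCore_map_mk'_normalCore A
    have hi : (A.map (QuotientGroup.mk' A.normalCore)).index = A.index :=
      index_map_eq _ (QuotientGroup.mk'_surjective _)
        (by rw [QuotientGroup.ker_mk']; exact A.normalCore_le)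
    rcases hidx with h | h
    · exact derivedSeries_two_eq_bot_of_index_prime hC hCmax hcore (hi ▸ h)
    · exact derivedSeries_two_eq_bot_of_index_four hC hCmax hcore (hi ▸ h)

theorem isCoatom_of_index_prime {A : Subgroup G} (h : A.index.Prime) : IsCoatom A := by
  refine ⟨fun h1 => ?_, fun B hB => ?_⟩
  · rw [h1, index_top] at h
    exact Nat.not_prime_one h
  · have h2 := relIndex_mul_index hB.le
    have h3 : A.relIndex B ≠ 1 := fun h => hB.not_ge (relIndex_eq_one.mp h)
    rcases h.eq_one_or_self_of_dvd _ ⟨_, h2.symm⟩ with h4 | h4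
    · exact absurd h4 h3
    · rw [h4] at h2
      exact index_eq_one.mp (Nat.eq_of_mul_eq_mul_left h.pos (h2.trans (mul_one _).symm))

theorem isCyclic_commutator_of_card_eq_eight (h8 : Nat.card G = 8) :
    IsCyclic (commutator G) := by
  have : Finite G := Nat.finite_of_card_ne_zero (by omega)
  have : Fact (Nat.Prime 2) := ⟨Nat.prime_two⟩
  have hp : IsPGroup 2 G := IsPGroup.of_card (n := 3) h8
  have : Nontrivial G := Finite.one_lt_card_iff_nontrivial.mp (by omega)
  have hZ : Nontrivial (center G) := hp.center_nontrivial
  have hZ1 : 1 < Nat.card (center G) := Finite.one_lt_card_iff_nontrivial.mpr hZ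
  have hmul : Nat.card (center G) * Nat.card (G ⧸ center G) = 8 := by
    rw [← index_eq_card, card_mul_index, h8]
  have hcomm : IsCyclic (G ⧸ center G) → IsCyclic (commutator G) := fun h => by
    have h1 := isMulCommutative_of_isCyclic_quotient_center_self (G := G)
    have h2 : commutator G = ⊥ := by
      rw [commutator_def, commutator_eq_bot_iff_le_centralizer]
      intro x _
      exact mem_centralizer_iff.mpr fun y _ => h1.is_comm.comm y x
    rw [h2]
    infer_instance
  have hd : Nat.card (center G) ∣ 8 := ⟨_, hmul.symm⟩
  have hle := Nat.le_of_dvd (by norm_num) hd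
  obtain h | h | h : Nat.card (center G) = 2 ∨ Nat.card (center G) = 4 ∨
      Nat.card (center G) = 8 := by
    interval_cases Nat.card (center G) <;> omega
  · rw [h] at hmul
    have h1 : Nat.card (G ⧸ center G) = 2 ^ 2 := by omega
    have h2 := commutator_le_of_isMulCommutative_quotient
      (IsPGroup.isMulCommutative_of_card_eq_prime_sq h1)
    have : IsCyclic (center G) := isCyclic_of_prime_card h
    exact isCyclic_of_le h2
  · rw [h] at hmul
    exact hcomm (isCyclic_of_prime_card (p := 2) (by omega))
  · rw [h] at hmul
    have h1 : Nat.card (G ⧸ center G) = 1 := by omega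
    have := (Nat.card_eq_one_iff_unique.mp h1).1
    exact hcomm inferInstance

/-- If the commutator subgroup centralizes a normal subgroup modulo which it is cyclic, then it
is commutative. -/
theorem derivedSeries_two_eq_bot_of_isCyclic_commutator_quotient {K : Subgroup G} [K.Normal]
    (hK : commutator G ≤ centralizer K) (hc : IsCyclic (commutator (G ⧸ K))) :
    derivedSeries G 2 = ⊥ := by
  refine derivedSeries_two_eq_bot_of_commutator_le (N := commutator G) ?_ le_rfl
  apply le_centralizer_of_isMulCommutative
  have hmap : ∀ x : commutator G, QuotientGroup.mk' K x ∈ commutator (G ⧸ K) := by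
    intro x
    rw [← derivedSeries_one, ← map_derivedSeries_eq (QuotientGroup.mk'_surjective K),
      derivedSeries_one]
    exact mem_map_of_mem _ x.2
  let f : commutator G →* commutator (G ⧸ K) :=
    ((QuotientGroup.mk' K).comp (commutator G).subtype).codRestrict _ hmap
  refine f.isMulCommutative_of_isCyclic_of_ker_le_center fun x hx => ?_
  have hxK : (x : G) ∈ K := by
    rw [← QuotientGroup.eq_one_iff]
    exact congrArg Subtype.val (MonoidHom.mem_ker.mp hx)
  rw [mem_center_iff]
  intro y
  exact Subtype.ext (mem_centralizer_iff.mp (hK y.2) x hxK).symm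

theorem derivedSeries_two_eq_bot_of_index_two_of_index_two [Finite G] {A M : Subgroup G}
    (hA : IsCyclic A) (hAM : A ≤ M) (hr : A.relIndex M = 2) (hM : M.index = 2) :
    derivedSeries G 2 = ⊥ := by
  have hA' : A ≤ centralizer A := le_centralizer_of_isMulCommutative inferInstance
  have hAi : A.index = 4 := by rw [← relIndex_mul_index hAM, hr, hM]
  have hMn : M.Normal := normal_of_index_eq_two hM
  have hAMn : M ≤ normalizer (A : Set G) :=
    (normal_subgroupOf_iff_le_normalizer hAM).mp (normal_of_index_eq_two hr)
  by_cases hn : A.Normal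
  · have : Fact (Nat.Prime 2) := ⟨Nat.prime_two⟩
    exact derivedSeries_two_eq_bot_of_commutator_le hA'
      (commutator_le_of_isMulCommutative_quotient
        (IsPGroup.isMulCommutative_of_card_eq_prime_sq (p := 2) (A.index_eq_card.symm.trans hAi)))
  have hNM : normalizer (A : Set G) = M := by
    rcases (isCoatom_of_index_prime (hM ▸ Nat.prime_two)).le_iff.mp hAMn with h | h
    · exact absurd (normalizer_eq_top_iff.mp h) hn
    · exact h
  obtain ⟨g, hgM⟩ : ∃ g, g ∉ M := by
    by_contra! h
    rw [(eq_top_iff' M).mpr h, index_top] at hM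
    omega
  have hmemM : ∀ m ∈ M, ∀ z, z ∈ A ↔ m * z * m⁻¹ ∈ A := fun m hm =>
    mem_normalizer_iff.mp (hAMn hm)
  have hg2 : g * g ∈ M := by
    have := mul_mem_iff_of_index_two hM (a := g) (b := g)
    simpa using this
  set B := A.map (MulAut.conj g).toMonoidHom with hBdef
  have hBmem : ∀ z, z ∈ B ↔ g⁻¹ * z * g ∈ A := by
    intro z
    constructor
    · rintro ⟨a, ha, rfl⟩
      simpa [mul_assoc] using ha
    · intro h
      exact ⟨_, h, by simp [mul_assoc]⟩
  have hBM : B ≤ M := by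
    rintro _ ⟨a, ha, rfl⟩
    exact hMn.conj_mem a (hAM ha) g
  have hBi : B.index = 4 := by
    have h1 : Nat.card B = Nat.card A := card_map_of_injective (MulAut.conj g).injective
    have h2 := B.card_mul_index
    rw [← A.card_mul_index, h1] at h2
    exact (Nat.eq_of_mul_eq_mul_left Nat.card_pos h2).trans hAi
  set K := A ⊓ B
  have hBnM : ∀ m ∈ M, ∀ z ∈ B, m * z * m⁻¹ ∈ B := by
    intro m hm z hz
    rw [hBmem] at hz ⊢
    have h1 : g⁻¹ * m * g ∈ M := by simpa using hMn.conj_mem m hm g⁻¹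
    have h2 := (hmemM _ h1 _).mp hz
    simpa [mul_assoc] using h2
  have hKn : K.Normal := by
    have hKM : ∀ m ∈ M, ∀ z ∈ K, m * z * m⁻¹ ∈ K := fun m hm z hz =>
      ⟨(hmemM m hm z).mp hz.1, hBnM m hm z hz.2⟩
    have hKg : ∀ z ∈ K, g * z * g⁻¹ ∈ K := fun z hz => by
      refine ⟨?_, ⟨z, hz.1, rfl⟩⟩
      have h1 := (hmemM _ hg2 _).mp ((hBmem z).mp hz.2)
      simpa [mul_assoc] using h1
    refine ⟨fun z hz h => ?_⟩
    by_cases hh : h ∈ M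
    · exact hKM h hh z hz
    · have h1 : h * g⁻¹ ∈ M := by
        rw [mul_mem_iff_of_index_two hM]
        simp [hh, hgM]
      have h2 := hKM _ h1 _ (hKg z hz)
      simpa [mul_assoc] using h2
  have hBA : ¬ B ≤ A := fun h => by
    have h1 : B = A := eq_of_le_of_card_ge h
      (card_map_of_injective (MulAut.conj g).injective).ge
    refine hgM (hNM ▸ ?_)
    rw [mem_normalizer_iff_map_conj_eq]
    exact h1
  have hKr : A.relIndex B = 2 := by
    have h1 : A.relIndex B ≤ 2 := hr ▸ relIndex_le_of_le_right hBM (by omega)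
    have h2 : A.relIndex B ≠ 1 := fun h => hBA (relIndex_eq_one.mp h)
    have h3 : A.relIndex B ≠ 0 := index_ne_zero_of_finite
    omega
  have hKi : K.index = 8 := by
    rw [← relIndex_mul_index (inf_le_right : K ≤ B), inf_relIndex_right, hKr, hBi]
  have hKc : IsCyclic K := isCyclic_of_le (inf_le_left : K ≤ A)
  exact derivedSeries_two_eq_bot_of_isCyclic_commutator_quotient
    (commutator_le_centralizer_of_isCyclic hKc)
    (isCyclic_commutator_of_card_eq_eight (K.index_eq_card.symm.trans hKi))

theorem derivedSeries_two_le_center_of_index_four [Finite G] {A : Subgroup G}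
    (hA : IsCyclic A) (h4 : A.index = 4) : derivedSeries G 2 ≤ center G := by
  have hA' : A ≤ centralizer A := le_centralizer_of_isMulCommutative inferInstance
  by_cases hmax : IsCoatom A
  · exact derivedSeries_two_le_center_of_isCoatom hA' hmax (Or.inr h4)
  · have hne : A ≠ ⊤ := by
      rintro rfl
      rw [index_top] at h4
      omega
    obtain ⟨M, hAM, hM⟩ : ∃ M, A < M ∧ M ≠ ⊤ := by
      by_contra! h
      exact hmax ⟨hne, h⟩
    have h1 := relIndex_mul_index hAM.le
    have h2 : A.relIndex M ≠ 1 := fun h => hAM.not_ge (relIndex_eq_one.mp h)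
    have h3 : M.index ≠ 1 := fun h => hM (index_eq_one.mp h)
    rw [h4] at h1
    have h5 : A.relIndex M ≤ 4 := Nat.le_of_dvd (by norm_num) ⟨_, h1.symm⟩
    have h6 : A.relIndex M = 2 := by
      interval_cases A.relIndex M <;> omega
    rw [h6] at h1
    exact (derivedSeries_two_eq_bot_of_index_two_of_index_two hA hAM.le h6 (by omega)).trans_le
      bot_le

theorem exists_sylow_le_of_not_dvd_index [Finite G] {p : ℕ} [Fact p.Prime] {A : Subgroup G}
    (h : ¬ p ∣ A.index) : ∃ P : Sylow p G, (P : Subgroup G) ≤ A := by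
  obtain ⟨Q⟩ : Nonempty (Sylow p A) := inferInstance
  have h1 : ¬ p ∣ ((Q : Subgroup A).map A.subtype).index := by
    rw [index_map_subtype, (Fact.out : p.Prime).dvd_mul]
    exact not_or.mpr ⟨Q.not_dvd_index, h⟩
  exact ⟨(Q.2.map A.subtype).toSylow h1, map_subtype_le _⟩

theorem le_normalizer_of_le_of_le_centralizer {A P : Subgroup G} (hA : A ≤ centralizer A)
    (hP : P ≤ A) : A ≤ normalizer (P : Set G) := by
  intro a ha
  refine mem_normalizer_iff.mpr fun z => ⟨fun hz => ?_, fun hz => ?_⟩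
  · rw [← mem_centralizer_iff.mp (hA ha) z (hP hz), mul_inv_cancel_right]
    exact hz
  · have h1 := mem_centralizer_iff.mp (hA ha) _ (hP hz)
    have h2 : a * z = a * (a * z * a⁻¹) := by rw [← h1, inv_mul_cancel_right]
    rw [mul_left_cancel h2]
    exact hz

theorem card_sylow_dvd_index_of_le [Finite G] {p : ℕ} [Fact p.Prime] {A : Subgroup G}
    (hA : A ≤ centralizer A) {P : Sylow p G} (hP : (P : Subgroup G) ≤ A) :
    Nat.card (Sylow p G) ∣ A.index := by
  rw [P.card_eq_index_normalizer]
  exact index_dvd_of_le (le_normalizer_of_le_of_le_centralizer hA hP)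

theorem normal_of_card_sylow_lt [Finite G] {p : ℕ} [Fact p.Prime] (P : Sylow p G)
    (h : Nat.card (Sylow p G) < p) : (P : Subgroup G).Normal := by
  have h1 : Nat.card (Sylow p G) = 1 :=
    Nat.ModEq.eq_of_lt_of_lt (card_sylow_modEq_one p G) h (Fact.out : p.Prime).one_lt
  have : Subsingleton (Sylow p G) := (Nat.card_eq_one_iff_unique.mp h1).1
  exact P.normal_of_subsingleton

theorem exists_normal_sylow_of_index_lt [Finite G] {p : ℕ} [Fact p.Prime] {A : Subgroup G}
    (hA : A ≤ centralizer A) (h : A.index < p) :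
    ∃ P : Sylow p G, (P : Subgroup G) ≤ A ∧ (P : Subgroup G).Normal := by
  have hpos : 0 < A.index := Nat.pos_of_ne_zero index_ne_zero_of_finite
  obtain ⟨P, hP⟩ := exists_sylow_le_of_not_dvd_index (Nat.not_dvd_of_pos_of_lt hpos h)
  exact ⟨P, hP, normal_of_card_sylow_lt P
    ((Nat.le_of_dvd hpos (card_sylow_dvd_index_of_le hA hP)).trans_lt h)⟩

theorem exists_normal_sylow_five_of_index_six [Finite G] {A : Subgroup G} [Fact (Nat.Prime 5)]
    (hAc : IsCyclic A) (h : A.index = 6) :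
    ∃ P : Sylow 5 G, (P : Subgroup G) ≤ A ∧ (P : Subgroup G).Normal := by
  have hA : A ≤ centralizer A := le_centralizer_of_isMulCommutative inferInstance
  obtain ⟨P, hP⟩ := exists_sylow_le_of_not_dvd_index (p := 5) (A := A) (by rw [h]; norm_num)
  refine ⟨P, hP, ?_⟩
  by_contra hPn
  have hAN : A ≤ normalizer (P : Set G) := le_normalizer_of_le_of_le_centralizer hA hP
  have hN : normalizer (P : Set G) = A := by
    have h1 := card_sylow_modEq_one 5 G
    rw [P.card_eq_index_normalizer] at h1
    have h2 := relIndex_mul_index hAN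
    rw [h] at h2
    have h3 : (normalizer (P : Set G)).index ≤ 6 :=
      Nat.le_of_dvd (by norm_num) (Dvd.intro_left _ h2)
    have h4 : (normalizer (P : Set G)).index ≠ 1 := fun h =>
      hPn (normalizer_eq_top_iff.mp (index_eq_one.mp h))
    have h5 : (normalizer (P : Set G)).index = 6 := by
      change (normalizer (P : Set G)).index % 5 = 1 % 5 at h1
      omega
    rw [h5] at h2
    exact (relIndex_eq_one.mp (by omega)).antisymm hAN
  have hmax : IsCoatom A := by
    refine ⟨fun h1 => ?_, fun M hM => ?_⟩
    · rw [h1, index_top] at h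
      omega
    · by_contra hMtop
      have hPM := hP.trans hM.le
      have h2 := relIndex_mul_index hM.le
      have h3 : A.relIndex M ≠ 1 := fun h => hM.not_ge (relIndex_eq_one.mp h)
      have h4 : M.index ≠ 1 := fun h => hMtop (index_eq_one.mp h)
      rw [h] at h2
      have h5 : A.relIndex M < 5 := by
        have h6 := Nat.le_of_dvd (by norm_num) (⟨_, h2.symm⟩ : A.relIndex M ∣ 6)
        by_contra! h7
        interval_cases A.relIndex M <;> omega
      have hA' : A.subgroupOf M ≤ centralizer (A.subgroupOf M : Set M) := fun x hx =>
        mem_centralizer_iff.mpr fun y hy =>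
          Subtype.ext (mem_centralizer_iff.mp (hA hx) y hy)
      have h8 := card_sylow_dvd_index_of_le hA' (P := P.subtype hPM)
        (by rw [Sylow.coe_subtype]; exact fun x hx => hP hx)
      have h9 : ((P : Subgroup G).subgroupOf M).Normal := by
        rw [← P.coe_subtype hPM]
        exact normal_of_card_sylow_lt _ ((Nat.le_of_dvd
          (Nat.pos_of_ne_zero index_ne_zero_of_finite) h8).trans_lt h5)
      exact hM.not_ge (((normal_subgroupOf_iff_le_normalizer hPM).mp h9).trans hN.le)
  set K := A.normalCore
  have hC := map_le_centralizer_map hA (QuotientGroup.mk' K)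
  have hi : (A.map (QuotientGroup.mk' K)).index = A.index :=
    index_map_eq _ (QuotientGroup.mk'_surjective _)
      (by rw [QuotientGroup.ker_mk']; exact A.normalCore_le)
  have h5 := not_dvd_card_of_index_six hC (isCoatom_map_mk' A.normalCore_le hmax)
    (normalCore_map_mk'_normalCore A) (hi.trans h)
  have hKi : K.index = Nat.card (A.map (QuotientGroup.mk' K)) * 6 := by
    rw [← h, ← hi, card_mul_index, index_eq_card]
  obtain ⟨Q, hQ⟩ := exists_sylow_le_of_not_dvd_index (p := 5) (A := K) (by
    rw [hKi, Nat.prime_five.dvd_mul]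
    exact not_or.mpr ⟨h5, by norm_num⟩)
  have hQn : (Q : Subgroup G).Normal :=
    normal_of_le_of_isCyclic (isCyclic_of_le A.normalCore_le) hQ
  obtain ⟨g, hg⟩ := MulAction.exists_smul_eq G Q P
  rw [Sylow.smul_eq_of_normal] at hg
  exact hPn (hg ▸ hQn)

theorem inf_derivedSeries_two_eq_bot [Finite G] {p : ℕ} [Fact p.Prime] (P : Sylow p G)
    [(P : Subgroup G).Normal] (hP : IsCyclic P) : (P : Subgroup G) ⊓ derivedSeries G 2 = ⊥ := by
  have hPc : (P : Subgroup G) ≤ centralizer (P : Set G) :=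
    le_centralizer_of_isMulCommutative inferInstance
  set C := centralizer (P : Set G) with hCdef
  have hG' : commutator G ≤ C := commutator_le_centralizer_of_isCyclic hP
  rw [eq_bot_iff]
  rintro y ⟨hyP, hy⟩
  have hy' : y ∈ (commutator C).map C.subtype := by
    rw [commutator_def, map_commutator, ← MonoidHom.range_eq_map, range_subtype]
    rw [derivedSeries_succ, derivedSeries_one] at hy
    exact commutator_mono hG' hG' hy
  obtain ⟨z, hz, rfl⟩ := hy'
  have h1 : z ^ (center C).index = 1 := by
    have h2 : commutator C ≤ (MonoidHom.transferCenterPow C).ker := by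
      rw [commutator_def, commutator_le]
      intro a _ b _
      rw [MonoidHom.mem_ker, map_commutatorElement, commutatorElement_eq_one_iff_mul_comm]
      exact Subtype.ext (mem_center_iff.mp (MonoidHom.transferCenterPow C b).2 _)
    exact congrArg Subtype.val (MonoidHom.mem_ker.mp (h2 hz))
  have h2 : (C.subtype z) ^ Nat.card P = 1 :=
    congrArg Subtype.val (pow_card_eq_one' (x := (⟨_, hyP⟩ : P)))
  have h3 : (P : Subgroup G).subgroupOf C ≤ center C := fun x hx =>
    mem_center_iff.mpr fun c => Subtype.ext (mem_centralizer_iff.mp c.2 x hx).symm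
  have h4 : (center C).index ∣ (P : Subgroup G).index :=
    (index_dvd_of_le h3).trans (relIndex_dvd_index_of_le hPc)
  have h5 : Nat.Coprime (center C).index (Nat.card P) :=
    Nat.Coprime.coprime_dvd_left h4 P.card_coprime_index.symm
  rw [← map_pow, map_eq_one_iff _ C.subtype_injective] at h2
  rw [mem_bot, map_eq_one_iff _ C.subtype_injective, ← orderOf_eq_one_iff]
  exact Nat.eq_one_of_dvd_coprimes h5 (orderOf_dvd_of_pow_eq_one h1) (orderOf_dvd_of_pow_eq_one h2)

open scoped commutatorElement in
theorem derivedSeries_two_le_center_of_quotient_sylow [Finite G] {p : ℕ} [Fact p.Prime]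
    (P : Sylow p G) [(P : Subgroup G).Normal] (hP : IsCyclic P)
    (h : derivedSeries (G ⧸ (P : Subgroup G)) 2 ≤ center _) : derivedSeries G 2 ≤ center G := by
  intro x hx
  rw [mem_center_iff]
  intro g
  rw [← map_derivedSeries_eq (QuotientGroup.mk'_surjective (P : Subgroup G))] at h
  have h1 := mem_center_iff.mp (h (mem_map_of_mem _ hx)) (QuotientGroup.mk' _ g)
  have h2 : ⁅g, x⁆ ∈ (P : Subgroup G) := by
    rw [← QuotientGroup.ker_mk' (P : Subgroup G), MonoidHom.mem_ker, map_commutatorElement,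
      commutatorElement_eq_one_iff_mul_comm]
    exact h1
  have h3 : ⁅g, x⁆ ∈ derivedSeries G 2 :=
    mul_mem ((derivedSeries_normal G 2).conj_mem x hx g) (inv_mem hx)
  have h4 := inf_derivedSeries_two_eq_bot P hP ▸ mem_inf.mpr ⟨h2, h3⟩
  exact commutatorElement_eq_one_iff_mul_comm.mp (mem_bot.mp h4)

end GroupTheory

section ElementOrders

open Subgroup

variable {G : Type*} [Group G]

theorem exists_mk_eq_pow_orderOf_eq_one [Finite G] (N : Subgroup G) [N.Normal]
    (h : (Nat.card N).Coprime N.index) (q : G ⧸ N) :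
    ∃ g : G, (g : G ⧸ N) = q ∧ g ^ orderOf q = 1 := by
  obtain ⟨g, rfl⟩ := QuotientGroup.mk_surjective q
  have hco : Nat.Coprime (orderOf (g : G ⧸ N)) (Nat.card N) :=
    Nat.Coprime.coprime_dvd_left (N.index_eq_card ▸ orderOf_dvd_natCard _) h.symm
  obtain ⟨k, hk1, hk0⟩ := Nat.chineseRemainder hco 1 0
  refine ⟨g ^ k, ?_, ?_⟩
  · rw [QuotientGroup.mk_pow, pow_eq_pow_iff_modEq.mpr hk1, pow_one]
  · have h1 : g ^ orderOf (g : G ⧸ N) ∈ N := by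
      rw [← QuotientGroup.eq_one_iff, QuotientGroup.mk_pow, pow_orderOf_eq_one]
    obtain ⟨c, rfl⟩ := (Nat.modEq_zero_iff_dvd).mp hk0
    have h2 : (g ^ orderOf (g : G ⧸ N)) ^ Nat.card N = 1 :=
      congrArg Subtype.val (pow_card_eq_one' (x := (⟨_, h1⟩ : N)))
    rw [← pow_mul] at h2
    rw [← pow_mul, mul_comm, ← mul_assoc, pow_mul, h2, one_pow]

theorem orderOf_mul_le_of_isCyclic [Finite G] {N : Subgroup G} [N.Normal] (hN : IsCyclic N)
    {g u : G} (hu : u ∈ N) {m : ℕ} (hm : 0 < m) (hg : g ^ m = 1) :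
    orderOf (g * u) ≤ m * orderOf u := by
  have := normal_of_le_of_isCyclic hN ((zpowers_le).mpr hu)
  have h1 : (g * u) ^ m ∈ zpowers u := by
    rw [← QuotientGroup.eq_one_iff, QuotientGroup.mk_pow, QuotientGroup.mk_mul,
      (QuotientGroup.eq_one_iff u).mpr (mem_zpowers u), mul_one, ← QuotientGroup.mk_pow, hg,
      QuotientGroup.mk_one]
  obtain ⟨k, hk⟩ := mem_zpowers_iff.mp h1
  refine orderOf_le_of_pow_eq_one (Nat.mul_pos hm (orderOf_pos u)) ?_
  rw [pow_mul, ← hk, ← zpow_natCast, ← zpow_mul, mul_comm, zpow_mul, zpow_natCast,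
    pow_orderOf_eq_one, one_zpow]

theorem psi_le_mul_psi_quotient [Fintype G] (N : Subgroup G) [N.Normal] (hN : IsCyclic N)
    (h : (Nat.card N).Coprime N.index) [Fintype N] [Fintype (G ⧸ N)] :
    psi G ≤ psi N * psi (G ⧸ N) := by
  choose r hr hr1 using exists_mk_eq_pow_orderOf_eq_one N h
  have hbij : Function.Bijective fun x : (G ⧸ N) × N => r x.1 * (x.2 : G) := by
    constructor
    · rintro ⟨q, u⟩ ⟨q', u'⟩ huv
      have hq : q = q' := by
        have h1 := congrArg (QuotientGroup.mk (s := N)) huv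
        simpa [hr] using h1
      subst hq
      simpa using huv
    · intro x
      refine ⟨⟨x, ⟨(r x)⁻¹ * x, ?_⟩⟩, by simp⟩
      rw [← QuotientGroup.eq, hr]
  rw [psi, psi, psi, mul_comm, Fintype.sum_mul_sum, ← Fintype.sum_prod_type',
    ← Fintype.sum_bijective _ hbij _ _ fun _ => rfl]
  refine Finset.sum_le_sum fun x _ => ?_
  rw [← orderOf_coe x.2]
  exact orderOf_mul_le_of_isCyclic hN x.2.2 (orderOf_pos _) (hr1 _)

theorem psi_le_of_card_eq_prime_pow [Fintype G] (hG : IsCyclic G) {p r : ℕ} (hp : p.Prime)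
    (h : Nat.card G = p ^ (r + 1)) :
    psi G ≤ p ^ (r + 1) * (p ^ (r + 1)).totient + p ^ r * p ^ r := by
  classical
  have hcard : Fintype.card G = p ^ (r + 1) := by rw [← Nat.card_eq_fintype_card, h]
  have h1 : (Finset.univ.filter fun a : G => orderOf a = p ^ (r + 1)).card
      = (p ^ (r + 1)).totient :=
    IsCyclic.card_orderOf_eq_totient (by rw [hcard])
  have h2 : (Finset.univ.filter fun a : G => ¬ orderOf a = p ^ (r + 1)).card = p ^ r := by
    have h3 := Finset.card_filter_add_card_filter_not (s := Finset.univ)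
      fun a : G => orderOf a = p ^ (r + 1)
    have h4 : (p ^ (r + 1)).totient + p ^ r = p ^ (r + 1) := by
      rw [Nat.totient_prime_pow_succ hp, ← Nat.mul_succ, Nat.succ_eq_add_one,
        Nat.sub_add_cancel hp.one_le, pow_succ]
    rw [h1, Finset.card_univ, hcard] at h3
    omega
  rw [psi, ← Finset.sum_filter_add_sum_filter_not _ fun a : G => orderOf a = p ^ (r + 1)]
  refine add_le_add ?_ ?_
  · rw [Finset.sum_congr rfl fun a ha => (Finset.mem_filter.mp ha).2, Finset.sum_const, h1,
      smul_eq_mul, mul_comm]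
  · rw [← smul_eq_mul (p ^ r)]
    nth_rw 1 [← h2]
    refine Finset.sum_le_card_nsmul _ _ _ fun a ha => ?_
    obtain ⟨k, hk, hka⟩ := (Nat.dvd_prime_pow hp).mp (h ▸ orderOf_dvd_natCard a)
    rw [hka]
    refine Nat.pow_le_pow_right hp.pos (Nat.le_of_lt_succ (hk.lt_of_ne ?_))
    rintro rfl
    exact (Finset.mem_filter.mp ha).2 hka

end ElementOrders

section TotientBound

universe u

open Subgroup

variable {G : Type*} [Group G]

theorem psi_le_of_isCyclic_sylow [Fintype G] {p : ℕ} [Fact p.Prime] (P : Sylow p G)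
    (hP : IsCyclic P) (hd : p ∣ Nat.card G) [Fintype P] :
    (psi P : ℚ) ≤ (1 + 1 / (p * (p - 1))) * (Nat.card P * (Nat.card P).totient) := by
  have hp : p.Prime := Fact.out
  obtain ⟨k, hk⟩ := P.2.exists_card_eq
  obtain ⟨r, rfl⟩ : ∃ r, k = r + 1 := by
    refine Nat.exists_eq_succ_of_ne_zero ?_
    rintro rfl
    exact hp.one_lt.ne' (Nat.dvd_one.mp (pow_zero p ▸ hk ▸ P.dvd_card_of_dvd_card hd))
  have h1 : (psi P : ℚ) ≤ p ^ (r + 1) * (p ^ (r + 1)).totient + p ^ r * p ^ r := by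
    exact_mod_cast psi_le_of_card_eq_prime_pow hP hp hk
  have hp1 : (1 : ℚ) < p := by exact_mod_cast hp.one_lt
  have hp0 : (p : ℚ) ≠ 0 := by positivity
  have hp2 : (p : ℚ) - 1 ≠ 0 := by linarith
  rw [Nat.totient_prime_pow_succ hp] at h1
  rw [hk, Nat.totient_prime_pow_succ hp]
  push_cast [hp.one_le] at h1 ⊢
  refine h1.trans_eq ?_
  field_simp
  ring

theorem totient_bound_quotient_sylow [Fintype G] {p : ℕ} [Fact p.Prime] (P : Sylow p G)
    [(P : Subgroup G).Normal] (hP : IsCyclic P) (hd : p ∣ Nat.card G)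
    [Fintype (G ⧸ (P : Subgroup G))] {c : ℚ} (hc : 0 ≤ c)
    (h : 3 * Nat.card G * (Nat.card G).totient ≤ 5 * c * psi G) :
    3 * Nat.card (G ⧸ (P : Subgroup G)) * (Nat.card (G ⧸ (P : Subgroup G))).totient ≤
      5 * (c * (1 + 1 / (p * (p - 1)))) * psi (G ⧸ (P : Subgroup G)) := by
  have : Fintype P := Fintype.ofFinite P
  have h1 : (psi G : ℚ) ≤ psi P * psi (G ⧸ (P : Subgroup G)) := by
    exact_mod_cast psi_le_mul_psi_quotient (P : Subgroup G) hP P.card_coprime_index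
  have h2 := psi_le_of_isCyclic_sylow P hP hd
  rw [← (P : Subgroup G).card_mul_index, Nat.totient_mul P.card_coprime_index,
    (P : Subgroup G).index_eq_card] at h
  have ha : (0 : ℚ) < Nat.card P := by exact_mod_cast Nat.card_pos
  have hb : (0 : ℚ) < (Nat.card P).totient := by
    exact_mod_cast Nat.totient_pos.mpr Nat.card_pos
  have hq : (0 : ℚ) ≤ psi (G ⧸ (P : Subgroup G)) := Nat.cast_nonneg _
  have h3 := h.trans (mul_le_mul_of_nonneg_left (h1.trans (mul_le_mul_of_nonneg_right h2 hq))
    (by positivity : 0 ≤ 5 * c))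
  refine le_of_mul_le_mul_left ?_ (mul_pos ha hb)
  push_cast at h3
  calc _ = _ := ?_
    _ ≤ _ := h3
    _ = _ := ?_ <;> ring

/-- The product of `1 - 1 / q` over the primes `q ≤ M`. -/
def totientRatio (M : ℕ) : ℚ := ∏ q ∈ (M + 1).primesBelow, (1 - (q : ℚ)⁻¹)

theorem totientRatio_zero : totientRatio 0 = 1 := by
  simp [totientRatio, Nat.primesBelow, Finset.filter_singleton, Nat.not_prime_zero]

theorem totientRatio_succ (M : ℕ) : totientRatio (M + 1) =
    if (M + 1).Prime then totientRatio M * (1 - ((M + 1 : ℕ) : ℚ)⁻¹) else totientRatio M := by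
  rw [totientRatio, Nat.primesBelow_succ]
  split_ifs
  · rw [Finset.prod_insert (Nat.notMem_primesBelow _), mul_comm, totientRatio]
  · rfl

theorem one_sub_inv_natCast_nonneg (q : ℕ) : 0 ≤ 1 - (q : ℚ)⁻¹ :=
  sub_nonneg.mpr (Nat.cast_inv_le_one q)

theorem totientRatio_nonneg (M : ℕ) : 0 ≤ totientRatio M :=
  Finset.prod_nonneg fun q _ => one_sub_inv_natCast_nonneg q

theorem mul_totientRatio_le_totient {n M : ℕ} (h : ∀ q, q.Prime → q ∣ n → q ≤ M) :
    n * totientRatio M ≤ n.totient := by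
  rw [Nat.totient_eq_mul_prod_factors]
  refine mul_le_mul_of_nonneg_left ?_ n.cast_nonneg
  refine Finset.prod_le_prod_of_subset_of_le_one (fun q hq => ?_)
    (fun q _ => one_sub_inv_natCast_nonneg q) fun q _ _ => ?_
  · have hq' := Nat.prime_of_mem_primeFactors hq
    exact Nat.mem_primesBelow.mpr
      ⟨Nat.lt_succ_of_le (h q hq' (Nat.dvd_of_mem_primeFactors hq)), hq'⟩
  · exact sub_le_self 1 (inv_nonneg.mpr q.cast_nonneg)

theorem totientRatio_lower_bound {M : ℕ} (hM : 13 ≤ M) : 192 / 77 / M ≤ totientRatio M := by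
  induction M, hM using Nat.le_induction with
  | base => norm_num [totientRatio_succ, totientRatio_zero]
  | succ k hk ih =>
    have hk0 : (13 : ℚ) ≤ k := by exact_mod_cast hk
    rw [totientRatio_succ]
    have h1 : 192 / 77 / ((k + 1 : ℕ) : ℚ) = 192 / 77 / k * (1 - ((k + 1 : ℕ) : ℚ)⁻¹) := by
      push_cast
      field_simp
      ring
    have h2 := one_sub_inv_natCast_nonneg (k + 1)
    split_ifs
    · rw [h1]
      exact mul_le_mul_of_nonneg_right ih h2
    · refine le_trans ?_ ih
      gcongr
      omega

theorem exists_index_zpowers_le [Fintype G] {M : ℕ} {c : ℚ}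
    (hM : ∀ q, q.Prime → q ∣ Nat.card G → q ≤ M)
    (h : 3 * Nat.card G * (Nat.card G).totient ≤ 5 * c * psi G) (hc : 0 ≤ c) :
    ∃ x : G, 3 * (zpowers x).index * totientRatio M ≤ 5 * c := by
  obtain ⟨x, -, hx⟩ := Finset.exists_max_image Finset.univ (fun y : G => orderOf y)
    ⟨1, Finset.mem_univ 1⟩
  refine ⟨x, ?_⟩
  have h1 : (psi G : ℚ) ≤ Nat.card G * orderOf x := by
    have h2 := Finset.sum_le_card_nsmul Finset.univ (fun y : G => orderOf y) _ hx
    rw [Finset.card_univ, ← Nat.card_eq_fintype_card] at h2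
    exact_mod_cast h2
  have h2 : (orderOf x : ℚ) * (zpowers x).index = Nat.card G := by
    rw [← Nat.card_zpowers]
    exact_mod_cast (zpowers x).card_mul_index
  have hn : (0 : ℚ) < Nat.card G := by exact_mod_cast Nat.card_pos
  have ho : (0 : ℚ) < orderOf x := by exact_mod_cast orderOf_pos x
  have h3 := mul_totientRatio_le_totient hM
  have h4 : 3 * ((Nat.card G).totient : ℚ) ≤ 5 * c * orderOf x := by
    refine le_of_mul_le_mul_left ?_ hn
    have := mul_le_mul_of_nonneg_left h1 (by positivity : 0 ≤ 5 * c)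
    linarith
  refine le_of_mul_le_mul_left ?_ ho
  rw [← h2] at h3
  linarith

/-- Every finite group whose order has no prime factor above `M` and whose sum of element orders
is at least `3 / (5 * L)` times that order times its totient has central second derived
subgroup. -/
def HasCentralDerivedSeriesTwo (M : ℕ) (L : ℚ) : Prop :=
  ∀ (G : Type u) [Group G] [Fintype G], (∀ q, q.Prime → q ∣ Nat.card G → q ≤ M) →
    3 * Nat.card G * (Nat.card G).totient ≤ 5 * L * psi G → derivedSeries G 2 ≤ center G

theorem HasCentralDerivedSeriesTwo.mono {M N : ℕ} {L L' : ℚ}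
    (h : HasCentralDerivedSeriesTwo.{u} N L') (hMN : ∀ q, q.Prime → q ≤ M → q ≤ N) (hL : L ≤ L') :
    HasCentralDerivedSeriesTwo.{u} M L := by
  intro G _ _ hM hG
  exact h G (fun q hq hd => hMN q hq (hM q hq hd)) (hG.trans (by gcongr))

theorem HasCentralDerivedSeriesTwo.of_cyclic_sylow {N p : ℕ} {L L' : ℚ} [Fact p.Prime]
    (h : HasCentralDerivedSeriesTwo.{u} N L') (hN : ∀ q, q.Prime → q < p → q ≤ N)
    (hL0 : 0 ≤ L) (hL : L * (1 + 1 / (p * (p - 1))) ≤ L')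
    (hS : ∀ (G : Type u) [Group G] [Fintype G], p ∣ Nat.card G → ∀ x : G,
      3 * (zpowers x).index * totientRatio p ≤ 5 * L → derivedSeries G 2 ≤ center G ∨
        ∃ P : Sylow p G, (P : Subgroup G) ≤ zpowers x ∧ (P : Subgroup G).Normal) :
    HasCentralDerivedSeriesTwo.{u} p L := by
  have hp : p.Prime := Fact.out
  have hp1 : (1 : ℚ) < p := by exact_mod_cast hp.one_lt
  have hp2 : 0 < (p : ℚ) - 1 := by linarith
  have hLL : L ≤ L' := (le_mul_of_one_le_right hL0 (by
    have : 0 ≤ 1 / (p * ((p : ℚ) - 1)) := by positivity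
    linarith)).trans hL
  intro G _ _ hM hG
  by_cases hd : p ∣ Nat.card G
  · obtain ⟨x, hx⟩ := exists_index_zpowers_le hM hG hL0
    obtain h1 | ⟨P, hPx, hPn⟩ := hS G hd x hx
    · exact h1
    have hP : IsCyclic P := isCyclic_of_le hPx
    have : Fintype (G ⧸ (P : Subgroup G)) := Fintype.ofFinite _
    refine derivedSeries_two_le_center_of_quotient_sylow P hP (h _ (fun q hq hqd => ?_)
      ((totient_bound_quotient_sylow P hP hd hL0 hG).trans (by gcongr)))
    rw [← (P : Subgroup G).index_eq_card] at hqd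
    refine hN q hq ((hM q hq (hqd.trans (P : Subgroup G).index_dvd_card)).lt_of_ne ?_)
    rintro rfl
    exact P.not_dvd_index hqd
  · refine h G (fun q hq hqd => hN q hq ((hM q hq hqd).lt_of_ne ?_)) (hG.trans (by gcongr))
    rintro rfl
    exact hd hqd

theorem HasCentralDerivedSeriesTwo.of_lt {N p : ℕ} {L L' : ℚ} (hp : p.Prime)
    (h : HasCentralDerivedSeriesTwo.{u} N L') (hN : ∀ q, q.Prime → q < p → q ≤ N)
    (hL0 : 0 ≤ L) (hL : L * (1 + 1 / (p * (p - 1))) ≤ L') (hLp : 5 * L < 3 * p * totientRatio p) :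
    HasCentralDerivedSeriesTwo.{u} p L := by
  have : Fact p.Prime := ⟨hp⟩
  refine h.of_cyclic_sylow hN hL0 hL fun G _ _ _ x hx => Or.inr ?_
  refine exists_normal_sylow_of_index_lt (le_centralizer_of_isMulCommutative inferInstance) ?_
  have h1 := hx.trans_lt hLp
  by_contra! h2
  have h3 : (p : ℚ) ≤ (zpowers x).index := by exact_mod_cast h2
  have := mul_le_mul_of_nonneg_right h3 (totientRatio_nonneg p)
  linarith

theorem derivedSeries_two_le_center_of_isCyclic_of_index_prime [Finite G] {A : Subgroup G}
    (hA : IsCyclic A) (h : A.index.Prime) : derivedSeries G 2 ≤ center G :=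
  derivedSeries_two_le_center_of_isCoatom (le_centralizer_of_isMulCommutative inferInstance)
    (isCoatom_of_index_prime h) (Or.inl h)

theorem hasCentralDerivedSeriesTwo_three {L : ℚ} (hL0 : 0 ≤ L) (hL : L < 6 / 5) :
    HasCentralDerivedSeriesTwo.{u} 3 L := by
  intro G _ _ hM hG
  obtain ⟨x, hx⟩ := exists_index_zpowers_le hM hG hL0
  have h1 : totientRatio 3 = 1 / 3 := by norm_num [totientRatio_succ, totientRatio_zero]
  rw [h1] at hx
  have h2 : (zpowers x).index < 6 := by
    have : ((zpowers x).index : ℚ) < 6 := by linarith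
    exact_mod_cast this
  have h5 : (zpowers x).index ≠ 5 := fun h => by
    have := hM 5 Nat.prime_five (h ▸ (zpowers x).index_dvd_card)
    omega
  have h0 : (zpowers x).index ≠ 0 := index_ne_zero_of_finite
  have hA : IsCyclic (zpowers x) := inferInstance
  obtain h | h | h | h : (zpowers x).index = 1 ∨ (zpowers x).index = 2 ∨ (zpowers x).index = 3 ∨
      (zpowers x).index = 4 := by omega
  · have h1 : commutator G ≤ zpowers x := index_eq_one.mp h ▸ le_top
    rw [derivedSeries_two_eq_bot_of_commutator_le
      (le_centralizer_of_isMulCommutative inferInstance) h1]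
    exact bot_le
  · exact derivedSeries_two_le_center_of_isCyclic_of_index_prime hA (h ▸ Nat.prime_two)
  · exact derivedSeries_two_le_center_of_isCyclic_of_index_prime hA (h ▸ Nat.prime_three)
  · exact derivedSeries_two_le_center_of_index_four hA h

theorem hasCentralDerivedSeriesTwo_five {L : ℚ} (hL0 : 0 ≤ L) (hL : L < 28 / 25) :
    HasCentralDerivedSeriesTwo.{u} 5 L := by
  have : Fact (Nat.Prime 5) := ⟨Nat.prime_five⟩
  have h1 : totientRatio 5 = 4 / 15 := by norm_num [totientRatio_succ, totientRatio_zero]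
  refine (hasCentralDerivedSeriesTwo_three (L := 21 / 20 * L) (by linarith)
    (by linarith)).of_cyclic_sylow (fun q hq hq5 => ?_) hL0 (by norm_num; linarith)
    fun G _ _ _ x hx => ?_
  · interval_cases q <;> revert hq <;> decide
  rw [h1] at hx
  have h2 : (zpowers x).index < 7 := by
    have : ((zpowers x).index : ℚ) < 7 := by linarith
    exact_mod_cast this
  have hA : IsCyclic (zpowers x) := inferInstance
  obtain h | h | h : (zpowers x).index < 5 ∨ (zpowers x).index = 5 ∨ (zpowers x).index = 6 := by
    omega
  · exact Or.inr
      (exists_normal_sylow_of_index_lt (le_centralizer_of_isMulCommutative inferInstance) h)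
  · exact Or.inl (derivedSeries_two_le_center_of_isCyclic_of_index_prime hA (h ▸ Nat.prime_five))
  · exact Or.inr (exists_normal_sylow_five_of_index_six hA h)

theorem hasCentralDerivedSeriesTwo_seven {L : ℚ} (hL0 : 0 ≤ L) (hL : L < 1093 / 1000) :
    HasCentralDerivedSeriesTwo.{u} 7 L := by
  have : Fact (Nat.Prime 7) := ⟨by norm_num⟩
  have h1 : totientRatio 7 = 8 / 35 := by norm_num [totientRatio_succ, totientRatio_zero]
  refine (hasCentralDerivedSeriesTwo_five (L := 43 / 42 * L) (by linarith)
    (by linarith)).of_cyclic_sylow (fun q hq hq7 => ?_) hL0 (by norm_num; linarith)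
    fun G _ _ _ x hx => ?_
  · interval_cases q <;> revert hq <;> decide
  rw [h1] at hx
  have h2 : (zpowers x).index < 8 := by
    have : ((zpowers x).index : ℚ) < 8 := by linarith
    exact_mod_cast this
  obtain h | h : (zpowers x).index < 7 ∨ (zpowers x).index = 7 := by omega
  · exact Or.inr
      (exists_normal_sylow_of_index_lt (le_centralizer_of_isMulCommutative inferInstance) h)
  · exact Or.inl (derivedSeries_two_le_center_of_isCyclic_of_index_prime
      (A := zpowers x) inferInstance (h ▸ Fact.out))

theorem hasCentralDerivedSeriesTwo_thirteen : HasCentralDerivedSeriesTwo.{u} 13 (16 / 15) := by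
  have h11 : totientRatio 11 = 16 / 77 := by norm_num [totientRatio_succ, totientRatio_zero]
  have h13 : totientRatio 13 = 192 / 1001 := by norm_num [totientRatio_succ, totientRatio_zero]
  have h := (hasCentralDerivedSeriesTwo_seven (L := 16 / 15 * (157 / 156) * (111 / 110))
    (by norm_num) (by norm_num)).of_lt (p := 11) (L := 16 / 15 * (157 / 156)) (by norm_num)
    (fun q hq hlt => by interval_cases q <;> revert hq <;> decide) (by norm_num) (by norm_num)
    (by norm_num [h11])
  exact h.of_lt (by norm_num) (fun q hq hlt => by interval_cases q <;> revert hq <;> decide)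
    (by norm_num) (by norm_num) (by norm_num [h13])

theorem hasCentralDerivedSeriesTwo_of_le {M : ℕ} (hM : 16 ≤ M) :
    HasCentralDerivedSeriesTwo.{u} M (M / (M - 1)) := by
  induction M, hM using Nat.le_induction with
  | base =>
    refine hasCentralDerivedSeriesTwo_thirteen.mono (fun q hq hlt => ?_) (by norm_num)
    by_contra!
    interval_cases q <;> revert hq <;> decide
  | succ k hk ih =>
    have hk0 : (16 : ℚ) ≤ k := by exact_mod_cast hk
    have hk1 : (0 : ℚ) < k - 1 := by linarith
    by_cases hp : (k + 1).Prime
    · refine ih.of_lt hp (fun q _ hq => Nat.le_of_lt_succ hq) ?_ ?_ ?_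
      · push_cast
        rw [add_sub_cancel_right]
        positivity
      · push_cast
        rw [add_sub_cancel_right, ← sub_nonneg]
        have : (k : ℚ) / (k - 1) - (k + 1) / k * (1 + 1 / ((k + 1) * k))
            = 1 / (k ^ 2 * (k - 1)) := by
          field_simp
          ring
        rw [this]
        positivity
      · have h1 := totientRatio_lower_bound (M := k + 1) (by omega)
        have h2 := mul_le_mul_of_nonneg_left h1 (by positivity : 0 ≤ 3 * ((k + 1 : ℕ) : ℚ))
        refine lt_of_lt_of_le ?_ h2
        push_cast
        rw [add_sub_cancel_right]
        have : 3 * ((k : ℚ) + 1) * (192 / 77 / (k + 1)) = 576 / 77 := by field_simp; norm_num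
        rw [this, mul_div_assoc', div_lt_iff₀ (by linarith)]
        linarith
    · refine ih.mono (fun q hq hqk => ?_) ?_
      · refine Nat.le_of_lt_succ (hqk.lt_of_ne ?_)
        rintro rfl
        exact hp hq
      · push_cast
        rw [add_sub_cancel_right, div_le_div_iff₀ (by linarith) hk1]
        nlinarith

end TotientBound

theorem solvable_of_psi_ge_totient {G : Type*} [Group G] [Fintype G] (n : ℕ)
    (hn : Fintype.card G = n) (hpsi : 3 * n * n.totient ≤ 5 * psi G) :
    IsSolvable G ∧ derivedSeries G 2 ≤ Subgroup.center G := by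
  have h : derivedSeries G 2 ≤ Subgroup.center G := by
    have hpsi' : (3 * n * n.totient : ℚ) ≤ 5 * psi G := by exact_mod_cast hpsi
    have hn' : Nat.card G = n := by rw [Nat.card_eq_fintype_card, hn]
    refine hasCentralDerivedSeriesTwo_of_le (le_max_left 16 n) G (fun q _ hq => ?_) ?_
    · rw [hn'] at hq
      exact (Nat.le_of_dvd (hn' ▸ Nat.card_pos) hq).trans (le_max_right _ _)
    · rw [hn']
      refine hpsi'.trans (mul_le_mul_of_nonneg_right ?_ (Nat.cast_nonneg _))
      have h16 : (16 : ℚ) ≤ (max 16 n : ℕ) := by exact_mod_cast le_max_left 16 n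
      refine le_mul_of_one_le_right (by norm_num) ?_
      rw [one_le_div (by linarith)]
      linarith
  exact ⟨isSolvable_of_derivedSeries_two_le_center h, h⟩
end

section
/- Let G be a finite group of order n > 1, let q be the smallest prime divisor of n and p the largest prime divisor of n, and suppose q·ψ(G) ≥ n·φ(n), where φ is Euler's totient function. Then either G has a normal cyclic Sylow p-subgroup, or G is solvable and has a cyclic maximal subgroup whose index in G is either p or p+1. -/
open Subgroup in
theorem Subgroup.mem_of_commute_of_normalCore_eq_bot {G : Type*} [Group G] {C : Subgroup G}
    [IsMulCommutative C] (hC : IsCoatom C) (hcore : C.normalCore = ⊥) {a g : G} (ha : a ∈ C)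
    (ha1 : a ≠ 1) (h : Commute a g) : g ∈ C := by
  have hle : C ≤ centralizer {a} := fun c hc => by
    rw [mem_centralizer_singleton_iff]
    exact setLike_mul_comm hc ha
  rcases hC.le_iff.mp hle with htop | heq
  · refine absurd ?_ ha1
    have hmem : a ∈ C.normalCore := fun b => by
      have hb : b ∈ centralizer {a} := htop ▸ mem_top b
      rw [mem_centralizer_singleton_iff] at hb
      rwa [hb, mul_inv_cancel_right]
    rwa [hcore, mem_bot] at hmem
  · rw [← heq, mem_centralizer_singleton_iff]
    exact h.eq.symm

open Subgroup in
theorem Subgroup.mem_of_conj_mem_of_normalCore_eq_bot {G : Type*} [Group G]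
    {C : Subgroup G} [IsMulCommutative C] (hC : IsCoatom C) (hcore : C.normalCore = ⊥) {a g : G}
    (ha : a ∈ C) (ha1 : a ≠ 1) (h : g * a * g⁻¹ ∈ C) : g ∈ C := by
  have hle : C ≤ normalizer (C : Set G) := le_normalizer
  have hg : g ∈ normalizer (C : Set G) := by
    refine mem_normalizer_iff.mpr fun c => ⟨fun hc => ?_, fun hc => ?_⟩
    · have hac : Commute a c := setLike_mul_comm ha hc
      exact mem_of_commute_of_normalCore_eq_bot hC hcore h (by simpa using ha1)
        (hac.map (MulAut.conj g).toMonoidHom)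
    · have hac : Commute (g * a * g⁻¹) (g * c * g⁻¹) := setLike_mul_comm h hc
      exact mem_of_commute_of_normalCore_eq_bot hC hcore ha ha1
        (hac.of_map (f := MulAut.conj g) (MulAut.conj g).injective)
  rcases hC.le_iff.mp hle with htop | heq
  · have hn : C.Normal := normalizer_eq_top_iff.mp htop
    rw [normalCore_eq_self] at hcore
    exact absurd (by simpa [hcore] using ha) ha1
  · rwa [heq] at hg

open Subgroup MulAction in
theorem Subgroup.card_dvd_index_sub_one_of_normalCore_eq_bot {G : Type*} [Group G] [Finite G]
    {C : Subgroup G} [IsMulCommutative C] (hC : IsCoatom C) (hcore : C.normalCore = ⊥) :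
    Nat.card C ∣ C.index - 1 := by
  classical
  have := Fintype.ofFinite C
  have := Fintype.ofFinite (G ⧸ C)
  have := Fintype.ofFinite (Quotient (orbitRel C (G ⧸ C)))
  have := fun c : C => Fintype.ofFinite (fixedBy (G ⧸ C) c)
  have key := sum_card_fixedBy_eq_card_orbits_mul_card_group C (G ⧸ C)
  have hfix : ∀ c : C, c ≠ 1 → Fintype.card (fixedBy (G ⧸ C) c) = 1 := by
    intro c hc
    rw [Fintype.card_eq_one_iff]
    refine ⟨⟨((1 : G) : G ⧸ C), ?_⟩, ?_⟩
    · change (((c : G) * 1 : G) : G ⧸ C) = ((1 : G) : G ⧸ C)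
      rw [QuotientGroup.eq]
      simp
    · rintro ⟨x, hx⟩
      induction x using QuotientGroup.induction_on with
      | H g =>
        have hx' : (((c : G) * g : G) : G ⧸ C) = (g : G ⧸ C) := hx
        rw [QuotientGroup.eq] at hx'
        have hmem : g⁻¹ * (c : G) * g⁻¹⁻¹ ∈ C := by
          have := inv_mem hx'
          have h2 : g⁻¹ * (c : G) * g ∈ C := by simpa [mul_assoc] using this
          simpa using h2
        have hg : g⁻¹ ∈ C := mem_of_conj_mem_of_normalCore_eq_bot hC hcore c.2
          (by simpa using hc) hmem
        refine Subtype.ext ?_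
        change (g : G ⧸ C) = ((1 : G) : G ⧸ C)
        rw [QuotientGroup.eq]
        simpa using hg
  have hone : Fintype.card (fixedBy (G ⧸ C) (1 : C)) = C.index := by
    rw [Subgroup.index, ← Nat.card_eq_fintype_card, fixedBy_one_eq_univ, Nat.card_univ]
  rw [← Finset.add_sum_erase _ _ (Finset.mem_univ (1 : C)), hone,
    Finset.sum_congr rfl fun c hc => hfix c (Finset.ne_of_mem_erase hc), Finset.sum_const,
    Finset.card_erase_of_mem (Finset.mem_univ _), Finset.card_univ, smul_eq_mul, mul_one] at key
  rw [Nat.card_eq_fintype_card]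
  have hpos : 0 < Fintype.card C := Fintype.card_pos
  have hi : 0 < C.index := Nat.pos_of_ne_zero index_ne_zero_of_finite
  have h2 : C.index - 1 + Fintype.card C =
      Fintype.card (Quotient (orbitRel C (G ⧸ C))) * Fintype.card C := by
    rw [← key]; omega
  exact (Nat.dvd_add_left dvd_rfl).mp (Dvd.intro_left _ h2.symm)

open Subgroup in
theorem isSolvable_of_isCoatom_of_card_lt_prime {G : Type*} [Group G] [Finite G]
    {C : Subgroup G} [IsMulCommutative C] (hC : IsCoatom C) {p : ℕ} (hp : p.Prime)
    (hi : C.index = p) (hlt : Nat.card C < p) : Group.IsSolvable G := by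
  have := Fact.mk hp
  have hcard : Nat.card C * p = Nat.card G := hi ▸ C.card_mul_index
  have hCpos : 0 < Nat.card C := Nat.card_pos
  have hnd : ¬ p ∣ Nat.card C := fun h => absurd (Nat.le_of_dvd hCpos h) (by omega)
  obtain ⟨P⟩ : Nonempty (Sylow p G) := inferInstance
  have hpP : p ∣ Nat.card P := P.dvd_card_of_dvd_card (Dvd.intro_left _ hcard)
  have hsyl : Nat.card (Sylow p G) ∣ Nat.card C := by
    have h1 : Nat.card (Sylow p G) ∣ (P : Subgroup G).index := P.card_dvd_index
    refine h1.trans ?_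
    obtain ⟨k, hk⟩ := hpP
    have h2 := (P : Subgroup G).card_mul_index
    rw [← hcard] at h2
    change Nat.card (P : Subgroup G) = _ at hk
    rw [hk, mul_comm (Nat.card C), mul_assoc] at h2
    have h3 := Nat.eq_of_mul_eq_mul_left hp.pos h2
    exact Dvd.intro_left _ h3
  have hone : Nat.card (Sylow p G) = 1 := by
    have h1 : Nat.card (Sylow p G) ≡ 1 [MOD p] := card_sylow_modEq_one p G
    have h2 := Nat.le_of_dvd hCpos hsyl
    exact Nat.ModEq.eq_of_lt_of_lt h1 (by omega) hp.one_lt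
  have hn : (P : Subgroup G).Normal := by
    rw [P.card_eq_index_normalizer, index_eq_one] at hone
    exact normalizer_eq_top_iff.mp hone
  have hsup : C ⊔ P = ⊤ := by
    refine hC.2 _ (left_lt_sup.mpr fun hle => hnd (hpP.trans (card_dvd_of_le hle)))
  have hPs : Group.IsSolvable (P : Subgroup G) := by
    have := P.isPGroup'.isNilpotent
    infer_instance
  have hsurj : Function.Surjective
      ((QuotientGroup.mk' (P : Subgroup G)).comp C.subtype) := by
    rw [← MonoidHom.range_eq_top, MonoidHom.range_comp, C.range_subtype]
    have := congrArg (map (QuotientGroup.mk' (P : Subgroup G))) hsup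
    rwa [Subgroup.map_sup, QuotientGroup.map_mk'_self, sup_bot_eq,
      map_top_of_surjective _ (QuotientGroup.mk'_surjective _)] at this
  have hCs : Group.IsSolvable C := Group.isSolvable_of_comm fun a b => mul_comm' a b
  have hQ : Group.IsSolvable (G ⧸ (P : Subgroup G)) := Group.isSolvable_of_surjective hsurj
  exact Group.isSolvable_of_ker_le_range (P : Subgroup G).subtype
    (QuotientGroup.mk' (P : Subgroup G))
    (by simp)

open Subgroup in
theorem isSolvable_of_isCoatom_of_card_eq_prime {G : Type*} [Group G] [Finite G]
    {C : Subgroup G} [IsMulCommutative C] (hC : IsCoatom C) (hcore : C.normalCore = ⊥) {p : ℕ}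
    (hp : p.Prime) (hi : C.index = p + 1) (hcard : Nat.card C = p) : Group.IsSolvable G := by
  have := Fact.mk hp
  have hnd : ¬ p ∣ C.index := by
    rw [hi, Nat.dvd_add_right dvd_rfl]
    exact hp.one_lt.ne' ∘ Nat.dvd_one.mp
  let P : Sylow p G := (IsPGroup.of_card (n := 1) (by simpa using hcard)).toSylow hnd
  have hPC : (P : Subgroup G) = C := rfl
  have hCne : C ≠ ⊥ := fun h => hp.one_lt.ne' (by rw [← hcard, h, card_bot])
  have hnorm : normalizer (C : Set G) = C := by
    refine (hC.le_iff.mp le_normalizer).resolve_left fun htop => hCne ?_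
    have hn : C.Normal := normalizer_eq_top_iff.mp htop
    rwa [normalCore_eq_self] at hcore
  have hP : normalizer (P : Set G) ≤ centralizer (P : Set G) := by
    change normalizer (C : Set G) ≤ centralizer (C : Set G)
    rw [hnorm]
    exact le_centralizer C
  have hcompl := MonoidHom.ker_transferSylow_isComplement' P hP
  set f := MonoidHom.transferSylow P hP
  replace hcompl : f.ker.IsComplement' C := hcompl
  have hK : Nat.card f.ker = p + 1 := by
    rw [← hi, ← Nat.mul_left_inj (Nat.card_pos (α := C)).ne', hcompl.card_mul_card,
      C.index_mul_card]
  have hconj : ∀ k : f.ker, k ≠ 1 → ∀ l : f.ker, l ≠ 1 → orderOf l = orderOf k := by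
    intro k hk l hl
    let F : C → {x : f.ker // x ≠ 1} := fun c =>
      ⟨MulAut.conjNormal (c : G) k, by simpa using hk⟩
    have hinj : Function.Injective F := by
      intro c d hcd
      by_contra hne
      have h1 : (c : G) * k * (c : G)⁻¹ = d * k * (d : G)⁻¹ := by
        have := congrArg (fun x => ((x : f.ker) : G)) (congrArg Subtype.val hcd)
        simpa [F] using this
      have h2 : Commute ((d : G)⁻¹ * c) k := by
        have : (c : G) * k = d * k * (d : G)⁻¹ * c := by rw [← h1]; group
        rw [commute_iff_eq, mul_assoc, this]; group
      have h3 : (k : G) ∈ C := mem_of_commute_of_normalCore_eq_bot hC hcore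
        (mul_mem (inv_mem d.2) c.2) (fun h => hne (Subtype.ext (inv_mul_eq_one.mp h).symm)) h2
      have h4 := hcompl.disjoint.le_bot (mem_inf.mpr ⟨k.2, h3⟩)
      exact hk (Subtype.ext (mem_bot.mp h4))
    have hcards : Nat.card {x : f.ker // x ≠ 1} ≤ Nat.card C := by
      have := Set.ncard_compl ({1} : Set f.ker)
      rw [Set.ncard_singleton, hK, ← Nat.card_coe_set_eq] at this
      rw [hcard]
      exact this.le
    obtain ⟨c, hc⟩ := ((Nat.bijective_iff_injective_and_card F).mpr
      ⟨hinj, le_antisymm (Nat.card_le_card_of_injective F hinj) hcards⟩).2 ⟨l, hl⟩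
    have : MulAut.conjNormal (c : G) k = l := congrArg Subtype.val hc
    rw [← this]
    exact MulEquiv.orderOf_eq (MulAut.conjNormal (c : G)) k
  have hKs : Group.IsSolvable f.ker := by
    obtain ⟨r, hr, hrd⟩ := Nat.exists_prime_and_dvd (n := p + 1) (by have := hp.pos; omega)
    have := Fact.mk hr
    obtain ⟨k, hk⟩ := exists_prime_orderOf_dvd_card' (G := f.ker) r (hK ▸ hrd)
    have hk1 : k ≠ 1 := fun h => hr.one_lt.ne' (by rw [← hk, h, orderOf_one])
    have hpg : IsPGroup r f.ker := fun l => by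
      by_cases hl : l = 1
      · exact ⟨0, by simp [hl]⟩
      · exact ⟨1, by rw [pow_one, ← hk, ← hconj k hk1 l hl, pow_orderOf_eq_one]⟩
    have := hpg.isNilpotent
    infer_instance
  have hPs : Group.IsSolvable P := Group.isSolvable_of_comm fun a b =>
    Subtype.ext (setLike_mul_comm (s := C) a.2 b.2)
  exact Group.isSolvable_of_ker_le_range f.ker.subtype f (by simp)

open Subgroup in
theorem isSolvable_of_isCoatom_of_index_eq {G : Type*} [Group G] [Finite G]
    {C : Subgroup G} [IsMulCommutative C] (hC : IsCoatom C) {p : ℕ} (hp : p.Prime)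
    (hi : C.index = p ∨ C.index = p + 1) : Group.IsSolvable G := by
  let π := QuotientGroup.mk' C.normalCore
  have hπ : Function.Surjective π := QuotientGroup.mk'_surjective _
  have hker : π.ker ≤ C := by
    rw [QuotientGroup.ker_mk']
    exact C.normalCore_le
  have hcomap : (C.map π).comap π = C := by rw [comap_map_eq, sup_eq_left.mpr hker]
  have hcomm : IsMulCommutative (C.map π) := inferInstance
  have hindex : (C.map π).index = C.index := index_map_eq _ hπ hker
  have hcoatom : IsCoatom (C.map π) := by
    refine ⟨fun h => hC.1 ?_, fun H hH => ?_⟩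
    · rw [← hcomap, h, comap_top]
    · have h1 : C < H.comap π := 
        hcomap.symm.trans_lt ((comap_lt_comap_of_surjective hπ).mpr hH)
      exact comap_injective hπ (by rw [hC.2 _ h1, comap_top])
  have hcore : (C.map π).normalCore = ⊥ := by
    have h1 : (C.map π).normalCore.comap π ≤ C.normalCore :=
      normal_le_normalCore.mpr ((comap_mono (normalCore_le _)).trans hcomap.le)
    rw [eq_bot_iff, ← map_comap_eq_self_of_surjective hπ (C.map π).normalCore]
    refine (map_mono h1).trans ?_
    rw [QuotientGroup.map_mk'_self]
  have hdvd := card_dvd_index_sub_one_of_normalCore_eq_bot hcoatom hcore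
  have hQ : Group.IsSolvable (G ⧸ C.normalCore) := by
    rcases hi with hi | hi
    · rw [hi] at hindex
      rw [hindex] at hdvd
      have := hp.one_lt
      exact isSolvable_of_isCoatom_of_card_lt_prime hcoatom hp hindex
        (lt_of_le_of_lt (Nat.le_of_dvd (by omega) hdvd) (by omega))
    · rw [hi] at hindex
      rw [hindex, Nat.add_sub_cancel, Nat.dvd_prime hp] at hdvd
      rcases hdvd with h1 | h1
      · rw [card_eq_one] at h1
        rw [h1] at hcoatom
        obtain ⟨g, -, hg⟩ := SetLike.exists_of_lt hcoatom.lt_top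
        have htop : zpowers g = ⊤ := hcoatom.2 _ (bot_lt_iff_ne_bot.mpr (by simpa using hg))
        have : IsCyclic (G ⧸ C.normalCore) := ⟨g, (eq_top_iff' _).mp htop⟩
        exact Group.isSolvable_of_comm fun a b => mul_comm' a b
      · exact isSolvable_of_isCoatom_of_card_eq_prime hcoatom hcore hp hindex h1
  have hK : Group.IsSolvable C.normalCore := Group.isSolvable_of_comm fun a b =>
    Subtype.ext (setLike_mul_comm (C.normalCore_le a.2) (C.normalCore_le b.2))
  exact Group.isSolvable_of_ker_le_range C.normalCore.subtype π (by simp [π])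

open Subgroup in
theorem Sylow.exists_le_of_not_dvd_index {G : Type*} [Group G] [Finite G] {p : ℕ}
    [Fact p.Prime] {C : Subgroup G} (h : ¬ p ∣ C.index) :
    ∃ P : Sylow p G, (P : Subgroup G) ≤ C := by
  obtain ⟨Q⟩ : Nonempty (Sylow p C) := inferInstance
  have hQ : ¬ p ∣ ((Q : Subgroup C).map C.subtype).index := by
    rw [index_map_subtype]
    exact fun h' => ((Fact.out : p.Prime).dvd_mul.mp h').elim Q.not_dvd_index h
  exact ⟨(Q.isPGroup'.map C.subtype).toSylow hQ, map_subtype_le _⟩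

theorem Subgroup.isCoatom_of_prime_index {G : Type*} [Group G] {C : Subgroup G}
    (h : C.index.Prime) : IsCoatom C := by
  refine ⟨fun htop => h.ne_one (htop ▸ index_top), fun H hH => ?_⟩
  have hmul := relIndex_mul_index hH.le
  rcases (Nat.dvd_prime h).mp (Dvd.intro_left _ hmul) with h1 | h1
  · exact index_eq_one.mp h1
  · rw [h1] at hmul
    exact absurd (relIndex_eq_one.mp (Nat.eq_of_mul_eq_mul_right h.pos (by rwa [one_mul])))
      hH.not_ge

open Subgroup in
theorem sylow_normal_or_isCoatom_of_index_lt {G : Type*} [Group G] [Finite G] {p : ℕ}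
    [Fact p.Prime] {C : Subgroup G} [IsCyclic C] (hlt : C.index < 2 * p) :
    (∃ P : Sylow p G, (P : Subgroup G).Normal ∧ IsCyclic (P : Subgroup G)) ∨
    (IsCoatom C ∧ (C.index = p ∨ C.index = p + 1)) := by
  have hp : p.Prime := Fact.out
  have hCpos : 0 < C.index := Nat.pos_of_ne_zero index_ne_zero_of_finite
  by_cases hd : p ∣ C.index
  · have hi : C.index = p := by
      obtain ⟨k, hk⟩ := hd
      rw [hk, mul_comm] at hlt
      have h1 := lt_of_mul_lt_mul_right hlt (Nat.zero_le p)
      have h2 : k ≠ 0 := by rintro rfl; omega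
      have h3 : k = 1 := by omega
      simpa [h3] using hk
    exact Or.inr ⟨isCoatom_of_prime_index (hi ▸ hp), Or.inl hi⟩
  · obtain ⟨P, hPC⟩ := Sylow.exists_le_of_not_dvd_index hd
    have hPcyc : IsCyclic (P : Subgroup G) := isCyclic_of_le hPC
    have hCN : C ≤ normalizer (P : Set G) :=
      (le_centralizer C).trans ((centralizer_le hPC).trans (centralizer_le_normalizer _))
    by_cases hone : Nat.card (Sylow p G) = 1
    · rw [P.card_eq_index_normalizer, index_eq_one] at hone
      exact Or.inl ⟨P, normalizer_eq_top_iff.mp hone, hPcyc⟩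
    · have hmod : Nat.card (Sylow p G) ≡ 1 [MOD p] := card_sylow_modEq_one p G
      have hrel := relIndex_mul_index hCN
      rw [← P.card_eq_index_normalizer] at hrel
      have hpos : 0 < Nat.card (Sylow p G) := Nat.card_pos
      obtain ⟨k, hk⟩ := (Nat.modEq_iff_dvd' hpos).mp hmod.symm
      have hk0 : k ≠ 0 := by rintro rfl; omega
      have hge : p + 1 ≤ Nat.card (Sylow p G) := by
        have := Nat.le_mul_of_pos_right p (Nat.pos_of_ne_zero hk0)
        omega
      have hr1 : C.relIndex (normalizer (P : Set G)) = 1 := by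
        have h1 : C.relIndex (normalizer (P : Set G)) ≠ 0 := by
          intro h
          rw [h] at hrel
          omega
        have h2 : C.relIndex (normalizer (P : Set G)) < 2 := by
          by_contra! h
          have := Nat.mul_le_mul h hge
          omega
        omega
      rw [hr1, one_mul] at hrel
      have hNC : normalizer (P : Set G) ≤ C := relIndex_eq_one.mp hr1
      have hi : C.index = p + 1 := by
        have hk1 : k < 2 := by
          by_contra! h
          have := Nat.mul_le_mul_left p h
          omega
        have : k = 1 := by omega
        subst this
        omega
      refine Or.inr ⟨⟨fun h => ?_, fun H hH => ?_⟩, Or.inr hi⟩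
      · rw [h, index_top] at hi
        have := hp.pos
        omega
      · by_contra hHtop
        have hmul := relIndex_mul_index hH.le
        have hH1 : H.index ≠ 1 := index_eq_one.not.mpr hHtop
        have hH0 : H.index ≠ 0 := index_ne_zero_of_finite
        have hrp : C.relIndex H ≤ p := by
          have h2 : C.relIndex H * 2 ≤ p + 1 := by
            rw [← hi, ← hmul]
            exact Nat.mul_le_mul_left _ (by omega)
          have := hp.one_lt
          omega
        have hPH : (P : Subgroup G) ≤ H := hPC.trans hH.le
        have hdvd : Nat.card (Sylow p H) ∣ C.relIndex H := by
          rw [(P.subtype hPH).card_eq_index_normalizer, relIndex]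
          refine index_dvd_of_le fun x hx => ?_
          have hle : C.subgroupOf H ≤ normalizer ((P.subtype hPH : Subgroup H) : Set H) := by
            have : IsMulCommutative (C.subgroupOf H) := inferInstance
            exact (le_centralizer (C.subgroupOf H)).trans
              ((centralizer_le (comap_mono hPC)).trans (centralizer_le_normalizer _))
          exact hle hx
        have hr0 : C.relIndex H ≠ 0 := fun h => by rw [h] at hmul; omega
        have hmodH : Nat.card (Sylow p H) ≡ 1 [MOD p] := card_sylow_modEq_one p H
        have hndp := not_dvd_card_sylow p H
        have hleH := Nat.le_of_dvd (Nat.pos_of_ne_zero hr0) hdvd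
        have hneH : Nat.card (Sylow p H) ≠ p := fun h => hndp (dvd_of_eq h.symm)
        have hcH : Nat.card (Sylow p H) = 1 :=
          Nat.ModEq.eq_of_lt_of_lt hmodH (by omega) hp.one_lt
        rw [(P.subtype hPH).card_eq_index_normalizer, index_eq_one] at hcH
        have hnorm : ((P : Subgroup G).subgroupOf H).Normal := normalizer_eq_top_iff.mp hcH
        exact hH.not_ge
          (((normal_subgroupOf_iff_le_normalizer hPH).mp hnorm).trans hNC)

theorem Finset.prod_Icc_one_sub_inv {a b : ℕ} (ha : 1 < a) (hab : a ≤ b) :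
    ∏ k ∈ Finset.Icc a b, (1 - (k : ℚ)⁻¹) = ((a : ℚ) - 1) / b := by
  induction b, hab using Nat.le_induction with
  | base =>
    have : (a : ℚ) ≠ 0 := by positivity
    simp only [Finset.Icc_self, Finset.prod_singleton]
    field_simp
  | succ b hb ih =>
    rw [Finset.prod_Icc_succ_top (by omega), ih]
    have : (b : ℚ) ≠ 0 := by have : 0 < b := by omega
                             positivity
    push_cast
    field_simp
    ring

theorem Nat.mul_minFac_sub_one_le_totient_mul {n p : ℕ} (h1 : 1 < n) (hp : p.Prime) (hpd : p ∣ n)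
    (hpmax : ∀ r : ℕ, r.Prime → r ∣ n → r ≤ p) :
    n * (n.minFac - 1) ≤ n.totient * p := by
  have hq : n.minFac.Prime := Nat.minFac_prime h1.ne'
  have hqp : n.minFac ≤ p := Nat.minFac_le_of_dvd hp.two_le hpd
  have hsub : n.primeFactors ⊆ Finset.Icc n.minFac p := fun r hr => by
    have hr' := Nat.prime_of_mem_primeFactors hr
    have hrd := Nat.dvd_of_mem_primeFactors hr
    exact Finset.mem_Icc.mpr ⟨Nat.minFac_le_of_dvd hr'.two_le hrd, hpmax r hr' hrd⟩
  have hprod : ((n.minFac : ℚ) - 1) / p ≤ ∏ r ∈ n.primeFactors, (1 - (r : ℚ)⁻¹) := by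
    rw [← Finset.prod_Icc_one_sub_inv hq.one_lt hqp]
    refine Finset.prod_le_prod_of_subset_of_le_one hsub (fun i hi => ?_) fun i _ _ => ?_
    · exact sub_nonneg.mpr (Nat.cast_inv_le_one i)
    · exact sub_le_self _ (by positivity)
  have hp0 : (0 : ℚ) < p := by exact_mod_cast hp.pos
  have hfin : (n : ℚ) * ((n.minFac : ℚ) - 1) ≤ n.totient * p := by
    rw [Nat.totient_eq_mul_prod_factors, mul_assoc]
    exact mul_le_mul_of_nonneg_left ((div_le_iff₀ hp0).mp hprod) (by positivity)
  have hcast : ((n.minFac - 1 : ℕ) : ℚ) = (n.minFac : ℚ) - 1 := by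
    rw [Nat.cast_sub hq.one_le, Nat.cast_one]
  rw [← hcast] at hfin
  exact_mod_cast hfin

theorem exists_psi_lt_card_mul_orderOf {G : Type*} [Group G] [Fintype G]
    (h1 : 1 < Fintype.card G) : ∃ x : G, psi G < Fintype.card G * orderOf x := by
  obtain ⟨x, -, hx⟩ := Finset.exists_max_image (Finset.univ : Finset G) orderOf ⟨1, by simp⟩
  have := Fintype.one_lt_card_iff_nontrivial.mp h1
  obtain ⟨y, hy⟩ := exists_ne (1 : G)
  have hy1 : 1 < orderOf y :=
    lt_of_le_of_ne (orderOf_pos y) fun h => hy (orderOf_eq_one_iff.mp h.symm)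
  refine ⟨x, ?_⟩
  have : ∑ z : G, orderOf z < ∑ _z : G, orderOf x :=
    Finset.sum_lt_sum hx
      ⟨1, Finset.mem_univ _, by rw [orderOf_one]; exact hy1.trans_le (hx y (Finset.mem_univ _))⟩
  simpa [psi] using this

theorem normal_sylow_or_cyclic_maximal_of_psi_ge {G : Type*} [Group G] [Fintype G] (n p : ℕ)
    (hn : Fintype.card G = n) (h1 : 1 < n)
    (hp : p.Prime) (hpd : p ∣ n) (hpmax : ∀ r : ℕ, r.Prime → r ∣ n → r ≤ p)
    (hpsi : n * n.totient ≤ n.minFac * psi G) :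
    (∃ P : Sylow p G, (P : Subgroup G).Normal ∧ IsCyclic (P : Subgroup G)) ∨
    (IsSolvable G ∧ ∃ M : Subgroup G, IsCyclic M ∧ IsCoatom M ∧
      (M.index = p ∨ M.index = p + 1)) := by
  have := Fact.mk hp
  obtain ⟨x, hx⟩ := exists_psi_lt_card_mul_orderOf (hn ▸ h1 : 1 < Fintype.card G)
  rw [hn] at hx
  have hq : n.minFac.Prime := Nat.minFac_prime h1.ne'
  have hcard : orderOf x * (Subgroup.zpowers x).index = n := by
    rw [← Nat.card_zpowers, Subgroup.card_mul_index, Nat.card_eq_fintype_card, hn]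
  have htot : n.totient < n.minFac * orderOf x := by
    have h2 := hpsi.trans_lt (Nat.mul_lt_mul_of_pos_left hx hq.pos)
    rw [mul_left_comm] at h2
    exact lt_of_mul_lt_mul_left h2 (Nat.zero_le n)
  have hlt : (Subgroup.zpowers x).index < 2 * p := by
    have h3 := Nat.mul_minFac_sub_one_le_totient_mul h1 hp hpd hpmax
    have h4 : n.minFac ≤ 2 * (n.minFac - 1) := by have := hq.two_le; omega
    have h5 : orderOf x * (Subgroup.zpowers x).index * n.minFac
        < orderOf x * (2 * p) * n.minFac := by
      calc orderOf x * (Subgroup.zpowers x).index * n.minFac = n * n.minFac := by rw [hcard]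
        _ ≤ n * (2 * (n.minFac - 1)) := Nat.mul_le_mul_left _ h4
        _ = 2 * (n * (n.minFac - 1)) := by ring
        _ ≤ 2 * (n.totient * p) := Nat.mul_le_mul_left _ h3
        _ < 2 * (n.minFac * orderOf x * p) := by
          have := Nat.mul_lt_mul_of_pos_right htot hp.pos
          omega
        _ = orderOf x * (2 * p) * n.minFac := by ring
    exact lt_of_mul_lt_mul_left (lt_of_mul_lt_mul_right h5 (Nat.zero_le _)) (Nat.zero_le _)
  rcases sylow_normal_or_isCoatom_of_index_lt hlt with h | ⟨hC, hi⟩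
  · exact Or.inl h
  · exact Or.inr ⟨isSolvable_of_isCoatom_of_index_eq hC hp hi, _, inferInstance, hC, hi⟩
end

section
/- Let G be a finite group having a cyclic maximal subgroup. Then G is solvable and the second derived subgroup G'' is contained in the center Z(G). -/
open scoped Pointwise

/-- A fixed-point-free automorphism of a finite group stabilizes a Sylow `p`-subgroup. -/
theorem MonoidHom.FixedPointFree.exists_smul_sylow_eq {K : Type*} [Group K] [Finite K]
    {φ : MulAut K} (hφ : MonoidHom.FixedPointFree φ) (p : ℕ) [Fact p.Prime] :
    ∃ Q : Sylow p K, φ • Q = Q := by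
  obtain ⟨Q⟩ : Nonempty (Sylow p K) := inferInstance
  obtain ⟨k, hk⟩ := MulAction.exists_smul_eq K Q (φ • Q)
  obtain ⟨y, hy⟩ := hφ.commutatorMap_surjective k⁻¹
  refine ⟨y⁻¹ • Q, ?_⟩
  have hconj : φ * MulAut.conj y⁻¹ = MulAut.conj (φ y⁻¹) * φ := by ext; simp
  have hyk : φ y⁻¹ * k = y⁻¹ := by
    rw [MonoidHom.commutatorMap_apply] at hy
    rw [← inv_inv k, ← hy, map_inv, inv_div, mul_div, inv_mul_cancel, one_div]
  rw [Sylow.smul_def, ← mul_smul, hconj, mul_smul, ← hk, Sylow.smul_def, ← mul_smul, ← map_mul, hyk]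

/-- A fixed-point-free automorphism of a finite group stabilizes at most one Sylow
`p`-subgroup. -/
theorem MonoidHom.FixedPointFree.sylow_eq_of_smul_eq {K : Type*} [Group K] [Finite K]
    {φ : MulAut K} (hφ : MonoidHom.FixedPointFree φ) {p : ℕ} [Fact p.Prime] {Q R : Sylow p K}
    (hQ : φ • Q = Q) (hR : φ • R = R) : Q = R := by
  obtain ⟨x, rfl⟩ := MulAction.exists_smul_eq K Q R
  have key (y : K) : φ • (y • Q) = φ y • Q := by
    have hconj : φ * MulAut.conj y = MulAut.conj (φ y) * φ := by ext; simp
    rw [Sylow.smul_def, ← mul_smul, hconj, mul_smul, hQ, Sylow.smul_def]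
  let N := MulAction.stabilizer K Q
  have hφN (y : K) (hy : y ∈ N) : φ y ∈ N := by
    have hy' : y • Q = Q := hy
    change φ y • Q = Q
    rw [← key, hy', hQ]
  have hf (y : N) : MonoidHom.commutatorMap φ (y : K) ∈ N := N.div_mem y.2 (hφN y y.2)
  let f (y : N) : N := ⟨MonoidHom.commutatorMap φ (y : K), hf y⟩
  have hfinj : Function.Injective f := fun a b h =>
    Subtype.ext (hφ.commutatorMap_injective (congrArg Subtype.val h))
  have hx : x⁻¹ / φ x⁻¹ ∈ N := by
    change (x⁻¹ / φ x⁻¹) • Q = Q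
    rw [map_inv, div_inv_eq_mul, mul_smul, ← key, hR, inv_smul_smul]
  obtain ⟨y, hy⟩ := Finite.surjective_of_injective hfinj ⟨_, hx⟩
  have hyx : (y : K) = x⁻¹ := hφ.commutatorMap_injective (congrArg Subtype.val hy)
  have hxN : x ∈ N := by
    rw [← inv_inv x, ← hyx]
    exact N.inv_mem y.2
  exact (show x • Q = Q from hxN).symm

namespace Subgroup

variable {G : Type*} [Group G]

/-- A subgroup of a normal complement of a maximal subgroup `C` which is stable under conjugation
by `C` is trivial or the whole complement. -/
theorem eq_bot_or_eq_top_of_conjNormal_mem {C K : Subgroup G} [K.Normal] (hC : IsCoatom C)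
    (hKC : Disjoint K C) (L : Subgroup K)
    (hL : ∀ c ∈ C, ∀ l ∈ L, MulAut.conjNormal c l ∈ L) : L = ⊥ ∨ L = ⊤ := by
  have hnorm : C ≤ normalizer (L.map K.subtype : Set G) := by
    have hmem (c : G) (hc : c ∈ C) (x : G) (hx : x ∈ L.map K.subtype) :
        c * x * c⁻¹ ∈ L.map K.subtype := by
      obtain ⟨l, hl, rfl⟩ := hx
      exact ⟨_, hL c hc l hl, by simp⟩
    intro c hc
    rw [mem_normalizer_iff]
    refine fun x => ⟨hmem c hc x, fun hx => ?_⟩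
    simpa [mul_assoc] using hmem c⁻¹ (C.inv_mem hc) _ hx
  rcases hC.le_iff.mp (le_sup_left : C ≤ C ⊔ L.map K.subtype) with h | h
  · right
    rw [eq_top_iff]
    rintro ⟨k, hk⟩ -
    have hk' : k ∈ L.map K.subtype ⊔ C := by rw [sup_comm, h]; trivial
    rw [← SetLike.mem_coe, coe_mul_of_right_le_normalizer_left _ _ hnorm] at hk'
    obtain ⟨_, ⟨l, hl, rfl⟩, c, hc, rfl⟩ := hk'
    have hcK : c ∈ K := (K.mul_mem_cancel_left l.2).mp hk
    obtain rfl : c = 1 := disjoint_def.mp hKC hcK hc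
    simpa using hl
  · left
    rw [eq_bot_iff]
    intro l hl
    have hlC : (l : G) ∈ C := h ▸ le_sup_right (a := C) (mem_map_of_mem K.subtype hl)
    exact Subtype.ext (disjoint_def.mp hKC l.2 hlC)

/-- The commutator subgroup is contained in every normal maximal subgroup. -/
theorem commutator_le_of_isCoatom {C : Subgroup G} [C.Normal] (hC : IsCoatom C) :
    _root_.commutator G ≤ C := by
  obtain ⟨g, -, hg⟩ := SetLike.exists_of_lt hC.lt_top
  have hsup : C ⊔ zpowers g = ⊤ := by
    refine (hC.le_iff.mp le_sup_left).resolve_right fun h => hg ?_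
    rw [← h]
    exact le_sup_right (a := C) (mem_zpowers g)
  have hcyc : IsCyclic (G ⧸ C) := by
    refine ⟨(g : G ⧸ C), fun x => ?_⟩
    obtain ⟨x, rfl⟩ := QuotientGroup.mk_surjective x
    obtain ⟨c, hc, z, ⟨n, rfl⟩, rfl⟩ := mem_sup_of_normal_left.mp (hsup ▸ mem_top x)
    exact ⟨n, by simp [(QuotientGroup.eq_one_iff c).mpr hc]⟩
  have : IsMulCommutative (G ⧸ C) := inferInstance
  exact (Normal.quotient_commutative_iff_commutator_le).mp this

variable [Finite G]

/-- A subgroup meeting its other conjugates trivially is a Hall subgroup. -/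
theorem coprime_card_index_of_conj {C : Subgroup G}
    (hfrob : ∀ g ∉ C, ∀ c ∈ C, g⁻¹ * c * g ∈ C → c = 1) : (Nat.card C).Coprime C.index := by
  refine Nat.coprime_of_dvd fun p hp hpC hpi => ?_
  have : Fact p.Prime := ⟨hp⟩
  obtain ⟨c, hc⟩ := exists_prime_orderOf_dvd_card' p hpC
  have hP : IsPGroup p (zpowers (c : G)) :=
    IsPGroup.of_card (n := 1) (by rw [Nat.card_zpowers, orderOf_coe, hc, pow_one])
  have hfix : ((1 : G) : G ⧸ C) ∈ MulAction.fixedPoints (zpowers (c : G)) (G ⧸ C) := by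
    rintro ⟨x, hx⟩
    refine QuotientGroup.eq.mpr ?_
    simpa using (zpowers_le.mpr c.2) hx
  obtain ⟨b, hb, hne⟩ := hP.exists_fixed_point_of_prime_dvd_card_of_fixed_point (G ⧸ C) hpi hfix
  obtain ⟨g, rfl⟩ := QuotientGroup.mk_surjective b
  have hg : g ∉ C := fun h => hne (QuotientGroup.eq.mpr (by simpa using h))
  have hcg : g⁻¹ * c * g ∈ C := by
    have h := QuotientGroup.eq.mp (hb ⟨c, mem_zpowers _⟩).symm
    simpa [Subgroup.smul_def, mul_assoc] using h
  have hc1 : c = 1 := Subtype.ext (hfrob g hg c c.2 hcg)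
  rw [hc1, orderOf_one] at hc
  exact hp.one_lt.ne hc

open scoped IsMulCommutative in
/-- A commutative subgroup meeting its other conjugates trivially is disjoint from the kernel of
the transfer homomorphism. -/
theorem disjoint_ker_transfer_of_conj {C : Subgroup G} [IsMulCommutative C]
    (hfrob : ∀ g ∉ C, ∀ c ∈ C, g⁻¹ * c * g ∈ C → c = 1) :
    Disjoint (MonoidHom.transfer (MonoidHom.id C)).ker C := by
  rw [disjoint_def]
  intro c hc hcC
  have key : ∀ (k : ℕ) (g : G), g⁻¹ * c ^ k * g ∈ C → g⁻¹ * c ^ k * g = c ^ k := by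
    intro k g h
    by_cases hg : g ∈ C
    · rw [mul_assoc, setLike_mul_comm (C.pow_mem hcC k) hg, inv_mul_cancel_left]
    · simp [hfrob g hg _ (C.pow_mem hcC k) h]
  rw [MonoidHom.mem_ker, MonoidHom.transfer_eq_pow _ c key] at hc
  have hpow : c ^ C.index = 1 := congrArg Subtype.val hc
  have hcard : c ^ Nat.card C = 1 := congrArg Subtype.val (pow_card_eq_one' (x := (⟨c, hcC⟩ : C)))
  rw [← orderOf_eq_one_iff]
  exact Nat.eq_one_of_dvd_coprimes (coprime_card_index_of_conj hfrob)
    (orderOf_dvd_of_pow_eq_one hcard) (orderOf_dvd_of_pow_eq_one hpow)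

/-- If `C` is a commutative maximal subgroup containing an element `c` which acts without fixed
points on a normal complement `K` of `C`, then `K` is commutative. -/
theorem commutator_eq_bot_of_fixedPointFree {C K : Subgroup G} [IsMulCommutative C] [K.Normal]
    (hC : IsCoatom C) (hKC : Disjoint K C) {c : G} (hc : c ∈ C)
    (hfix : MonoidHom.FixedPointFree (MulAut.conjNormal c : MulAut K)) : ⁅K, K⁆ = ⊥ := by
  rcases subsingleton_or_nontrivial K with hK | hK
  · rw [(eq_bot_of_subsingleton K), commutator_bot_left]
  obtain ⟨q, hq, hqK⟩ := Nat.exists_prime_and_dvd (Finite.one_lt_card (α := K)).ne'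
  have : Fact q.Prime := ⟨hq⟩
  obtain ⟨Q, hQ⟩ := hfix.exists_smul_sylow_eq q
  have hCQ (d : G) (hd : d ∈ C) : (MulAut.conjNormal d : MulAut K) • Q = Q := by
    refine hfix.sylow_eq_of_smul_eq ?_ hQ
    rw [← mul_smul, ← map_mul, setLike_mul_comm hc hd, map_mul, mul_smul, hQ]
  have hQtop : (Q : Subgroup K) = ⊤ := by
    refine (eq_bot_or_eq_top_of_conjNormal_mem hC hKC Q fun d hd l hl => ?_).resolve_left
      (Q.ne_bot_of_dvd_card hqK)
    have h := smul_mem_pointwise_smul l (MulAut.conjNormal d : MulAut K) (Q : Subgroup K) hl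
    rw [← Sylow.pointwise_smul_def, hCQ d hd] at h
    exact h
  have hKq : IsPGroup q K := (hQtop ▸ Q.isPGroup').of_equiv topEquiv
  have := hKq.isNilpotent
  have hlt : _root_.commutator K < ⊤ := Group.IsSolvable.commutator_lt_top_of_nontrivial K
  have hbot : _root_.commutator K = ⊥ := by
    refine (eq_bot_or_eq_top_of_conjNormal_mem hC hKC _ fun d _ l hl => ?_).resolve_right hlt.ne
    have h := characteristic_iff_map_le.mp (inferInstance : (_root_.commutator K).Characteristic)
      (MulAut.conjNormal d)
    exact h (mem_map_of_mem _ hl)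
  rw [← map_subtype_commutator, hbot, map_bot]

/-- A finite group with a commutative maximal subgroup meeting its other conjugates trivially is
metabelian. -/
theorem derivedSeries_two_eq_bot_of_conj {C : Subgroup G} [IsMulCommutative C] (hC : IsCoatom C)
    (hfrob : ∀ g ∉ C, ∀ c ∈ C, g⁻¹ * c * g ∈ C → c = 1) (hne : C ≠ ⊥) :
    derivedSeries G 2 = ⊥ := by
  open scoped IsMulCommutative in
  let f : G →* C := MonoidHom.transfer (MonoidHom.id C)
  have hdisj : Disjoint f.ker C := disjoint_ker_transfer_of_conj hfrob
  obtain ⟨c, hc, hc1⟩ := C.bot_or_exists_ne_one.resolve_left hne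
  have hfix : MonoidHom.FixedPointFree (MulAut.conjNormal c : MulAut f.ker) := by
    intro k hk
    have hk' : c * k * c⁻¹ = k := by simpa using congrArg Subtype.val hk
    by_contra hk1
    have hkC : (k : G) ∉ C := fun h => hk1 (Subtype.ext (disjoint_def.mp hdisj k.2 h))
    refine hc1 (hfrob k hkC c hc ?_)
    have : (k : G)⁻¹ * c * k = c := by
      rw [mul_assoc, mul_inv_eq_iff_eq_mul.mp hk', inv_mul_cancel_left]
    rwa [this]
  rw [eq_bot_iff, ← commutator_eq_bot_of_fixedPointFree hC hdisj hc hfix, derivedSeries_succ,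
    derivedSeries_one]
  exact commutator_mono (Abelianization.commutator_subset_ker f)
    (Abelianization.commutator_subset_ker f)

/-- A commutative self-normalizing maximal subgroup meets its other conjugates in the center. -/
theorem mem_center_of_conj_mem {C : Subgroup G} [IsMulCommutative C] (hC : IsCoatom C)
    (hN : normalizer (C : Set G) = C) {g c : G} (hg : g ∉ C) (hc : c ∈ C)
    (hgc : g⁻¹ * c * g ∈ C) : c ∈ center G := by
  have hle : C ≤ centralizer {c} := fun x hx =>
    mem_centralizer_singleton_iff.mpr (setLike_mul_comm hx hc)
  rcases hC.le_iff.mp hle with h | h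
  · rw [mem_center_iff]
    intro x
    exact mem_centralizer_singleton_iff.mp (h ▸ mem_top x)
  · refine absurd ?_ hg
    rw [← hN]
    refine mem_normalizer_fintype fun x hx => ?_
    rw [SetLike.mem_coe, ← h, mem_centralizer_singleton_iff]
    have hcomm := setLike_mul_comm hx hgc
    have h' := congrArg (fun y => g * y * g⁻¹) hcomm
    simpa [mul_assoc] using h'

/-- The second derived subgroup of a finite group with a commutative maximal subgroup is
central. -/
theorem derivedSeries_two_le_center {C : Subgroup G} [IsMulCommutative C] (hC : IsCoatom C) :
    derivedSeries G 2 ≤ center G := by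
  rcases hC.le_iff.mp (le_normalizer : C ≤ normalizer (C : Set G)) with hN | hN
  · have : C.Normal := normalizer_eq_top_iff.mp hN
    have hle := commutator_le_of_isCoatom hC
    have hCC : ⁅C, C⁆ = ⊥ := commutator_eq_bot_iff_le_centralizer.mpr C.le_centralizer
    rw [derivedSeries_succ, derivedSeries_one]
    exact (commutator_mono hle hle).trans (hCC.le.trans bot_le)
  have hZC : center G ≤ C := by
    rw [← hN]
    exact (center_le_centralizer _).trans (centralizer_le_normalizer _)
  let π := QuotientGroup.mk' (center G)
  have hπ : Function.Surjective π := QuotientGroup.mk'_surjective _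
  have hcomap : (C.map π).comap π = C := by
    rw [comap_map_eq, QuotientGroup.ker_mk', sup_eq_left.mpr hZC]
  have hne : C.map π ≠ ⊥ := by
    intro h
    have hCZ : C ≤ center G := by
      rw [← hcomap, h, MonoidHom.comap_bot, QuotientGroup.ker_mk']
    have hnormal : C.Normal := le_antisymm hCZ hZC ▸ inferInstance
    exact hC.1 (hN.symm.trans (normalizer_eq_top_iff.mpr hnormal))
  have hmax : IsCoatom (C.map π) := by
    refine ⟨fun h => hC.1 (by rw [← hcomap, h, comap_top]), fun D hD => ?_⟩
    rw [← comap_lt_comap_of_surjective hπ, hcomap] at hD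
    rw [← (comap_injective hπ).eq_iff, hC.2 _ hD, comap_top]
  have hfrob : ∀ g ∉ C.map π, ∀ c ∈ C.map π, g⁻¹ * c * g ∈ C.map π → c = 1 := by
    intro g hg c hc hgc
    obtain ⟨g, rfl⟩ := hπ g
    obtain ⟨c, hc, rfl⟩ := hc
    rw [← map_inv, ← map_mul, ← map_mul, ← mem_comap, hcomap] at hgc
    exact (QuotientGroup.eq_one_iff c).mpr
      (mem_center_of_conj_mem hC hN (fun h => hg (mem_map_of_mem π h)) hc hgc)
  have hbot := derivedSeries_two_eq_bot_of_conj hmax hfrob hne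
  rw [← QuotientGroup.ker_mk' (center G), ← map_eq_bot_iff, map_derivedSeries_eq hπ, hbot]

end Subgroup

theorem solvable_of_cyclic_maximal {G : Type*} [Group G] [Fintype G]
    (C : Subgroup G) (hCcyc : IsCyclic C) (hCmax : IsCoatom C) :
    IsSolvable G ∧ derivedSeries G 2 ≤ Subgroup.center G := by
  have := hCcyc.isMulCommutative
  have h := Subgroup.derivedSeries_two_le_center hCmax
  refine ⟨⟨3, ?_⟩, h⟩
  rw [derivedSeries_succ, Subgroup.commutator_eq_bot_iff_le_centralizer]
  exact h.trans (Subgroup.center_le_centralizer _)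
end

section
/- Let G be a finite group of order 2^α·3^β (α, β ≥ 0) containing a cyclic subgroup of index less than 6. Then the second derived subgroup G'' is contained in the center Z(G). -/
open Subgroup
open scoped commutatorElement

theorem Group.isCyclic_of_card_lt_four {Q : Type*} [Group Q] [Finite Q] (h : Nat.card Q < 4) :
    IsCyclic Q := by
  have hpos : 0 < Nat.card Q := Nat.card_pos
  have : Nat.card Q = 1 ∨ Nat.card Q = 2 ∨ Nat.card Q = 3 := by lia
  rcases this with h | h | h
  · have := (Nat.card_eq_one_iff_unique.mp h).1
    infer_instance
  · exact isCyclic_of_prime_card (p := 2) h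
  · exact isCyclic_of_prime_card (p := 3) h

theorem Group.isKleinFour_of_card_le_four {Q : Type*} [Group Q] [Finite Q]
    (h : Nat.card Q ≤ 4) (hQ : ¬ IsCyclic Q) : IsKleinFour Q := by
  have h4 : Nat.card Q = 4 := by
    by_contra hne
    exact hQ (Group.isCyclic_of_card_lt_four (by lia))
  exact ⟨h4, (not_isCyclic_iff_exponent_eq_prime Nat.prime_two (by simpa using h4)).1 hQ⟩

theorem Subgroup.eq_top_of_isKleinFour_quotient {K : Type*} [Group K] {Z M : Subgroup K}
    [Z.Normal] [IsKleinFour (K ⧸ Z)] (hZM : Z ≤ M) {a b : K} (ha : a ∈ M) (hb : b ∈ M)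
    (haZ : a ∉ Z) (hbZ : b ∉ Z) (hab : a⁻¹ * b ∉ Z) : M = ⊤ := by
  have key : ∀ x y : K, y ∈ M → (x : K ⧸ Z) = y → x ∈ M := fun x y hy hxy => by
    have := M.mul_mem hy (hZM (QuotientGroup.eq.1 hxy.symm))
    simpa using this
  refine eq_top_iff.2 fun x _ => ?_
  by_cases h1 : (x : K ⧸ Z) = 1
  · exact key x 1 M.one_mem h1
  by_cases h2 : (x : K ⧸ Z) = a
  · exact key x a ha h2
  by_cases h3 : (x : K ⧸ Z) = b
  · exact key x b hb h3
  refine key x (a * b) (M.mul_mem ha hb) ?_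
  exact IsKleinFour.eq_mul_of_ne_all (mt (QuotientGroup.eq_one_iff a).1 haZ)
    (mt (QuotientGroup.eq_one_iff b).1 hbZ) (mt QuotientGroup.eq.1 hab) h1 h2 h3

theorem Group.card_commutator_le_two_of_index_center_le_four {K : Type*} [Group K] [Finite K]
    (h : (center K).index ≤ 4) : Nat.card (commutator K) ≤ 2 := by
  by_cases hcyc : IsCyclic (K ⧸ center K)
  · have := (QuotientGroup.mk' (center K)).isMulCommutative_of_isCyclic_of_ker_le_center
      (QuotientGroup.ker_mk' _).le
    rw [(commutator_eq_bot_iff_center_eq_top (G := K)).2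
      (eq_top_iff.2 fun x _ => mem_center_iff.2 fun y => mul_comm' y x)]
    simp
  have hK := Group.isKleinFour_of_card_le_four h hcyc
  obtain ⟨a, b, hab⟩ : ∃ a b : K, a * b ≠ b * a := by
    by_contra! hcomm
    refine hcyc ?_
    have : center K = ⊤ := eq_top_iff.2 fun x _ => mem_center_iff.2 fun y => hcomm y x
    have : Subsingleton (K ⧸ center K) := QuotientGroup.subsingleton_iff.2 this
    infer_instance
  have haZ : a ∉ center K := fun ha => hab (mem_center_iff.1 ha b).symm
  have hbZ : b ∉ center K := fun hb => hab (mem_center_iff.1 hb a)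
  have habZ : a⁻¹ * b ∉ center K := fun h => hab (by
    have := mem_center_iff.1 h a
    simpa [mul_assoc] using congrArg (a * ·) this)
  have hsq (x : K) : x * x ∈ center K := by
    rw [← QuotientGroup.eq_one_iff, QuotientGroup.mk_mul, IsKleinFour.mul_self]
  have hcZ : ⁅a, b⁆ ∈ center K := by
    rw [← QuotientGroup.eq_one_iff]
    have := (IsKleinFour.isMulCommutative (G := K ⧸ center K)).is_comm.comm
      (a : K ⧸ center K) b
    change ⁅(a : K ⧸ center K), (b : K ⧸ center K)⁆ = 1
    rw [commutatorElement_eq_one_iff_mul_comm, this]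
  set c := ⁅a, b⁆ with hc
  have hcab : a * b = c * (b * a) := by simp [hc, commutatorElement_def, mul_assoc]
  have hc2 : c * c = 1 := by
    have h1 : a * a * b = c * c * (b * (a * a)) := by
      rw [mul_assoc, hcab, ← mul_assoc, mem_center_iff.1 hcZ a, mul_assoc, ← mul_assoc a b,
        hcab]
      simp only [mul_assoc]
    rw [← mem_center_iff.1 (hsq a) b] at h1
    simpa using h1
  have hN : (zpowers c).Normal := by
    refine ⟨fun n hn g => ?_⟩
    have : n ∈ center K := (zpowers_le.2 hcZ) hn
    rwa [mem_center_iff.1 this g, mul_inv_cancel_right]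
  let π := QuotientGroup.mk' (zpowers c)
  have hπc : π c = 1 := (QuotientGroup.eq_one_iff c).2 (mem_zpowers c)
  let M (y : K) : Subgroup K := (centralizer {π y}).comap π
  have hM (x y : K) : x ∈ M y ↔ π x * π y = π y * π x := by
    simp [M, mem_comap, mem_centralizer_singleton_iff]
  have hMZ (y : K) : center K ≤ M y := fun z hz => by
    rw [hM, ← map_mul, ← map_mul, mem_center_iff.1 hz y]
  have hπab : π a * π b = π b * π a := by
    rw [← map_mul, hcab, map_mul, hπc, one_mul, map_mul]
  have hMa : M a = ⊤ :=
    eq_top_of_isKleinFour_quotient (hMZ a) ((hM _ _).2 rfl) ((hM _ _).2 hπab.symm) haZ hbZ habZ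
  have hMb : M b = ⊤ :=
    eq_top_of_isKleinFour_quotient (hMZ b) ((hM _ _).2 hπab) ((hM _ _).2 rfl) haZ hbZ habZ
  have hMt (x : K) : M x = ⊤ := by
    have h1 : x ∈ M a := hMa ▸ mem_top x
    have h2 : x ∈ M b := hMb ▸ mem_top x
    rw [hM] at h1 h2
    exact eq_top_of_isKleinFour_quotient (hMZ x) ((hM _ _).2 h1.symm) ((hM _ _).2 h2.symm)
      haZ hbZ habZ
  have hle : commutator K ≤ zpowers c := by
    rw [commutator_def, commutator_le]
    intro x _ y _
    have h1 : x ∈ M y := hMt y ▸ mem_top x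
    rw [hM] at h1
    rw [← QuotientGroup.eq_one_iff]
    change ⁅π x, π y⁆ = 1
    rw [commutatorElement_eq_one_iff_mul_comm, h1]
  calc Nat.card (commutator K) ≤ Nat.card (zpowers c) := card_le_of_le hle
    _ = orderOf c := Nat.card_zpowers c
    _ ≤ 2 := Nat.le_of_dvd two_pos (orderOf_dvd_of_pow_eq_one (by rw [pow_two, hc2]))

theorem Subgroup.le_center_of_card_le_two {G : Type*} [Group G] (N : Subgroup G) [N.Normal]
    [Finite N] (h : Nat.card N ≤ 2) : N ≤ center G := by
  intro x hx
  rw [mem_center_iff]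
  intro g
  by_cases h1 : x = 1
  · simp [h1]
  have hconj : g * x * g⁻¹ ∈ N := Normal.conj_mem ‹_› x hx g
  by_contra hne
  have : Function.Injective ![(1 : N), ⟨x, hx⟩, ⟨_, hconj⟩] := by
    rw [← List.nodup_ofFn]
    simp [Subtype.ext_iff, Ne.symm h1, eq_mul_inv_iff_mul_eq, eq_comm, h1]
    grind
  have := Nat.card_le_card_of_injective _ this
  simp at this
  lia

theorem Group.commutator_le_centralizer_of_isCyclic {G : Type*} [Group G] (N : Subgroup G)
    [N.Normal] [IsCyclic N] : commutator G ≤ centralizer (N : Set G) := by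
  let _ := (IsCyclic.mulAutMulEquiv N).toMonoidHom.commGroupOfInjective
    (IsCyclic.mulAutMulEquiv N).injective
  intro x hx
  have hker := Abelianization.commutator_subset_ker (MulAut.conjNormal (H := N)) hx
  rw [mem_centralizer_iff]
  intro n hn
  have := congrArg Subtype.val (DFunLike.congr_fun (MonoidHom.mem_ker.1 hker) ⟨n, hn⟩)
  rw [MulAut.conjNormal_apply] at this
  exact (mul_inv_eq_iff_eq_mul.1 this).symm

theorem Equiv.Perm.card_commutator_le_four_of_card {X : Type*} [Finite X] (hX : Nat.card X = 4)
    {P : Subgroup (Equiv.Perm X)} (hP : Nat.card P = 4 ∨ Nat.card P = 8 ∨ Nat.card P = 12) :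
    Nat.card (⁅P, P⁆ : Subgroup (Equiv.Perm X)) ≤ 4 := by
  classical
  have := Fintype.ofFinite X
  by_cases h12 : Nat.card P = 12
  · have hS : Nat.card (Equiv.Perm X) = 24 := by rw [Nat.card_perm, hX]; rfl
    have hidx : P.index = 2 := by
      have := P.card_mul_index
      rw [h12, hS] at this
      lia
    rw [Equiv.Perm.eq_alternatingGroup_of_index_eq_two hidx, ← map_subtype_commutator,
      ← alternatingGroup.kleinFour_eq_commutator hX,
      Subgroup.card_map_of_injective (subtype_injective _),
      alternatingGroup.kleinFour_card_of_card_eq_four hX]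
  · have hp : IsPGroup 2 P := by
      rcases hP with h | h | h
      · exact IsPGroup.of_card (n := 2) h
      · exact IsPGroup.of_card (n := 3) h
      · contradiction
    have : Fact (Nat.Prime 2) := ⟨Nat.prime_two⟩
    have := hp.isNilpotent
    have : Nontrivial P := Finite.one_lt_card_iff_nontrivial.1 (by lia)
    have hlt := (commutator P).one_lt_index_of_ne_top
      (Group.IsSolvable.commutator_lt_top_of_nontrivial P).ne
    rw [← map_subtype_commutator, Subgroup.card_map_of_injective (subtype_injective _)]
    have := (commutator P).card_mul_index
    have : Nat.card (commutator P) * 2 ≤ Nat.card P := by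
      rw [← this]; gcongr; lia
    lia

theorem Equiv.Perm.card_commutator_le_three {X : Type*} [Finite X] (hX : Nat.card X ≤ 3) :
    Nat.card (commutator (Equiv.Perm X)) ≤ 3 := by
  classical
  have := Fintype.ofFinite X
  rcases subsingleton_or_nontrivial X with h | h
  · exact (card_le_card_group _).trans (by simp)
  · calc Nat.card (commutator (Equiv.Perm X)) ≤ Nat.card (alternatingGroup X) :=
        card_le_of_le (Abelianization.commutator_subset_ker _)
      _ = (Nat.card X).factorial / 2 := nat_card_alternatingGroup
      _ ≤ (3).factorial / 2 := by gcongr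
      _ = 3 := rfl

theorem Equiv.Perm.orderOf_le_three_of_fixed {X : Type*} (hX : Nat.card X = 4)
    (σ : Equiv.Perm X) (x : X) (hσ : σ x = x) : orderOf σ ≤ 3 := by
  have : Finite X := Nat.finite_of_card_ne_zero (by lia)
  let e₀ : X ≃ Fin 4 := Finite.equivFinOfCardEq hX
  let e : X ≃ Fin 4 := e₀.trans (Equiv.swap (e₀ x) 0)
  have he : e x = 0 := by simp [e]
  have key : ∀ τ : Equiv.Perm (Fin 4), τ 0 = 0 → τ ^ 2 = 1 ∨ τ ^ 3 = 1 := by decide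
  rw [← MulEquiv.orderOf_eq e.permCongrHom σ]
  have h0 : e.permCongrHom σ 0 = 0 := by
    change e (σ (e.symm 0)) = 0
    rw [← he, e.symm_apply_apply, hσ]
  rcases key _ h0 with h | h
  · exact (Nat.le_of_dvd two_pos (orderOf_dvd_of_pow_eq_one h)).trans (by simp)
  · exact Nat.le_of_dvd three_pos (orderOf_dvd_of_pow_eq_one h)

theorem Group.card_map_toPermHom_commutator_le_four {G : Type*} [Group G] [Finite G]
    (C : Subgroup G) [IsCyclic C] (hC : C.index ≤ 4) :
    Nat.card ((commutator G).map (MulAction.toPermHom G (G ⧸ C))) ≤ 4 := by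
  set f := MulAction.toPermHom G (G ⧸ C) with hf
  by_cases h4 : C.index = 4
  · have hker : f.ker ≤ C := by
      rw [hf, ← normalCore_eq_ker]
      exact normalCore_le C
    obtain ⟨g, rfl⟩ := (Subgroup.isCyclic_iff_exists_zpowers_eq_top C).1 ‹_›
    have hcard : Nat.card f.range = orderOf (f g) * 4 := by
      rw [← index_ker, ← relIndex_mul_index hker, relIndex_ker, h4, MonoidHom.map_zpowers,
        Nat.card_zpowers]
    have hpos : 0 < orderOf (f g) := orderOf_pos _
    have hle : orderOf (f g) ≤ 3 := by
      refine Equiv.Perm.orderOf_le_three_of_fixed h4 _ ((1 : G) : G ⧸ zpowers g) ?_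
      change ((g * 1 : G) : G ⧸ zpowers g) = (1 : G)
      rw [mul_one, QuotientGroup.eq]
      simp
    rw [commutator_def, map_commutator, ← MonoidHom.range_eq_map]
    exact Equiv.Perm.card_commutator_le_four_of_card h4 (by lia)
  · have hle : (commutator G).map f ≤ commutator (Equiv.Perm (G ⧸ C)) := by
      rw [commutator_def, map_commutator, commutator_def]
      exact commutator_mono le_top le_top
    exact (card_le_of_le hle).trans
      ((Equiv.Perm.card_commutator_le_three (X := G ⧸ C)
        (show C.index ≤ 3 by lia)).trans (by simp))

theorem Group.derivedSeries_two_le_center_of_index_le_four {G : Type*} [Group G] [Finite G]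
    (C : Subgroup G) [IsCyclic C] (hC : C.index ≤ 4) : derivedSeries G 2 ≤ center G := by
  set f := MulAction.toPermHom G (G ⧸ C) with hf
  have hker : f.ker ≤ C := by
    rw [hf, ← normalCore_eq_ker]
    exact normalCore_le C
  have : IsCyclic f.ker := isCyclic_of_injective (inclusion hker) (inclusion_injective hker)
  have hZ : f.ker.subgroupOf (commutator G) ≤ center (commutator G) := fun x hx =>
    mem_center_iff.2 fun y => Subtype.ext
      (mem_centralizer_iff.1 (Group.commutator_le_centralizer_of_isCyclic f.ker y.2) x hx).symm
  have hidx : (center (commutator G)).index ≤ 4 :=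
    calc (center (commutator G)).index ≤ f.ker.relIndex (commutator G) :=
          index_antitone hZ
      _ ≤ 4 := (relIndex_ker (K := commutator G) f).trans_le
          (Group.card_map_toPermHom_commutator_le_four C hC)
  refine le_center_of_card_le_two _ ?_
  have : derivedSeries G 2 = (commutator (commutator G)).map (commutator G).subtype := by
    rw [map_subtype_commutator]
    rfl
  rw [this, card_map_of_injective (subtype_injective _)]
  exact Group.card_commutator_le_two_of_index_center_le_four hidx

theorem two_three_group_cyclic_small_index {G : Type*} [Group G] [Fintype G]
    (α β : ℕ) (hcard : Fintype.card G = 2 ^ α * 3 ^ β)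
    (H : Subgroup G) (hHcyc : IsCyclic H) (hidx : H.index < 6) :
    derivedSeries G 2 ≤ Subgroup.center G := by
  refine Group.derivedSeries_two_le_center_of_index_le_four H ?_
  have h5 : H.index ≠ 5 := fun h => by
    have hdvd : 5 ∣ 2 ^ α * 3 ^ β := by
      rw [← hcard, ← Nat.card_eq_fintype_card, ← h]
      exact H.index_dvd_card
    have hp : Nat.Prime 5 := by norm_num
    rcases hp.dvd_mul.1 hdvd with h | h
    · exact absurd (hp.dvd_of_dvd_pow h) (by norm_num)
    · exact absurd (hp.dvd_of_dvd_pow h) (by norm_num)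
  lia
end
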